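/- arXiv:2509.10944 — 2 statements merged into one kernel-verified Lean document; each statement's English description precedes it below -/
import Mathlib

section
/- Let X be a CAT(0) space and C ⊂ X a closed convex subset with closest point projection π_C. Suppose there exists σ ≥ 0 such that dist(π_C(x), [x,y]) ≤ σ for all x ∈ X and y ∈ C. Then for any σ' > 2σ, whenever x ∈ X and y₁, y₂ ∈ C with π_C(x) ∈ [y₁,y₂], the geodesic triangle [x,y₁] ∪ [y₁,y₂] ∪ [y₂,x] is σ'-slim. -/
open Set Metric

/-- `γ` is a unit-speed geodesic on the interval `[a,b]`. -/
def IsGeodesicOn {X : Type*} [MetricSpace X] (γ : ℝ → X) (a b : ℝ) : Prop :=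
  ∀ s ∈ Set.Icc a b, ∀ t ∈ Set.Icc a b, dist (γ s) (γ t) = |s - t|

/-- `γ` is a unit-speed geodesic from `x` to `y`, parametrized on `[0, dist x y]`. -/
def GeodFromTo {X : Type*} [MetricSpace X] (γ : ℝ → X) (x y : X) : Prop :=
  IsGeodesicOn γ 0 (dist x y) ∧ γ 0 = x ∧ γ (dist x y) = y

/-- The geodesic segment traced by a geodesic `γ` from `x` to `y`. -/
def geodSeg {X : Type*} [MetricSpace X] (γ : ℝ → X) (x y : X) : Set X :=
  γ '' Set.Icc 0 (dist x y)

/-- A CAT(0) space: a geodesic metric space satisfying the CN (Bruhat--Tits)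
midpoint inequality, which characterizes CAT(0) among geodesic spaces. -/
class CAT0 (X : Type*) [MetricSpace X] : Prop where
  geodesic : ∀ x y : X, ∃ γ : ℝ → X, GeodFromTo γ x y
  cn : ∀ x y z m : X, dist y m = dist y z / 2 → dist m z = dist y z / 2 →
    dist x m ^ 2 ≤ (dist x y ^ 2 + dist x z ^ 2) / 2 - dist y z ^ 2 / 4

/-- A subset is (geodesically) convex if it contains every geodesic between its points. -/
def GeodConvex {X : Type*} [MetricSpace X] (C : Set X) : Prop :=
  ∀ γ : ℝ → X, ∀ a b : ℝ, a ≤ b → IsGeodesicOn γ a b → γ a ∈ C → γ b ∈ C →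
    ∀ t ∈ Set.Icc a b, γ t ∈ C

/-- `p` is the closest point projection onto `C`. -/
def IsClosestPointProj {X : Type*} [MetricSpace X] (C : Set X) (p : X → X) : Prop :=
  ∀ x : X, p x ∈ C ∧ ∀ z ∈ C, dist x (p x) ≤ dist x z

/-- `ℓ` is a (complete, unit-speed) geodesic line. -/
def IsGeodLine {X : Type*} [MetricSpace X] (ℓ : ℝ → X) : Prop :=
  ∀ s t : ℝ, dist (ℓ s) (ℓ t) = |s - t|

/-- A geodesic triangle with sides `S₁, S₂, S₃` is `σ'`-slim if each side is contained
in the `σ'`-neighborhood of the union of the other two. -/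
def SlimTri {X : Type*} [MetricSpace X] (σ' : ℝ) (S₁ S₂ S₃ : Set X) : Prop :=
  (∀ z ∈ S₁, Metric.infDist z (S₂ ∪ S₃) ≤ σ') ∧
  (∀ z ∈ S₂, Metric.infDist z (S₁ ∪ S₃) ≤ σ') ∧
  (∀ z ∈ S₃, Metric.infDist z (S₁ ∪ S₂) ≤ σ')

/-!
In a Busemann space the distance between two geodesics is a jointly convex function of the two
parameters, so two geodesic arcs issuing from a common point stay as close to each other as their
other endpoints are. Choosing one point on each side of a triangle cuts the perimeter at these
points into three pairs of arcs, one pair at each vertex; hence three points at pairwise distance at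
most `δ` make the triangle `δ`-slim. A point of one side at distance at most `σ` from the two other
sides, such as `π_C x`, provides three such points with `δ = 2σ`.
-/

theorem le_max_of_midpoint_le {g : ℝ → ℝ} {a b t : ℝ} (hg : ContinuousOn g (Icc a b))
    (hmid : ∀ u ∈ Icc a b, ∀ v ∈ Icc a b, g (midpoint ℝ u v) ≤ (g u + g v) / 2)
    (ht : t ∈ Icc a b) : g t ≤ max (g a) (g b) := by
  obtain ⟨m, ⟨ham, hmb⟩, hmax⟩ := isCompact_Icc.exists_isMaxOn ⟨t, ht⟩ hg
  rw [isMaxOn_iff] at hmax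
  have hab : a ≤ b := ham.trans hmb
  refine (hmax t ht).trans ?_
  -- The nearer endpoint, reflected in the maximizer `m`, stays in `[a, b]`.
  rcases le_total (m - a) (b - m) with h | h
  · have hr : m + (m - a) ∈ Icc a b := ⟨by linarith, by linarith⟩
    have key := hmid a (left_mem_Icc.2 hab) _ hr
    rw [show midpoint ℝ a (m + (m - a)) = m by
      rw [midpoint_eq_smul_add, invOf_eq_inv, smul_eq_mul]; ring] at key
    exact le_max_of_le_left (by linarith [hmax _ hr])
  · have hr : m - (b - m) ∈ Icc a b := ⟨by linarith, by linarith⟩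
    have key := hmid _ hr b (right_mem_Icc.2 hab)
    rw [show midpoint ℝ (m - (b - m)) b = m by
      rw [midpoint_eq_smul_add, invOf_eq_inv, smul_eq_mul]; ring] at key
    exact le_max_of_le_right (by linarith [hmax _ hr])

theorem convexOn_of_midpoint_le {E : Type*} [AddCommGroup E] [Module ℝ E] [TopologicalSpace E]
    [ContinuousAdd E] [ContinuousSMul ℝ E] {s : Set E} {f : E → ℝ} (hs : Convex ℝ s)
    (hf : ContinuousOn f s)
    (hmid : ∀ x ∈ s, ∀ y ∈ s, f (midpoint ℝ x y) ≤ (f x + f y) / 2) : ConvexOn ℝ s f := by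
  refine ⟨hs, fun x hx y hy a b ha hb hab => ?_⟩
  let ℓ : ℝ → E := fun u => (1 - u) • x + u • y
  let c : ℝ → ℝ := fun u => (1 - u) * f x + u * f y
  have hℓs : MapsTo ℓ (Icc 0 1) s := fun u hu =>
    hs hx hy (sub_nonneg.2 hu.2) hu.1 (sub_add_cancel 1 u)
  have hℓ : Continuous ℓ := by fun_prop
  have hc : Continuous c := by fun_prop
  have hℓmid (u v : ℝ) : ℓ (midpoint ℝ u v) = midpoint ℝ (ℓ u) (ℓ v) := by
    simp only [ℓ, midpoint_eq_smul_add, invOf_eq_inv, smul_eq_mul]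
    module
  have hcmid (u v : ℝ) : c (midpoint ℝ u v) = (c u + c v) / 2 := by
    simp only [c, midpoint_eq_smul_add, invOf_eq_inv, smul_eq_mul]
    ring
  have key : f (ℓ b) - c b ≤ max (f (ℓ 0) - c 0) (f (ℓ 1) - c 1) := by
    refine le_max_of_midpoint_le (g := fun u => f (ℓ u) - c u)
      ((hf.comp hℓ.continuousOn hℓs).sub hc.continuousOn) (fun u hu v hv => ?_)
      ⟨hb, by linarith⟩
    rw [hℓmid, hcmid]
    linarith [hmid _ (hℓs hu) _ (hℓs hv)]
  obtain rfl : a = 1 - b := by linarith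
  simpa [ℓ, c] using key

/-- `m` is a metric midpoint of `x` and `y`. In a metric space that is not a vector space this
replaces Mathlib's `midpoint`; it need not be unique. -/
structure IsMetricMidpoint {X : Type*} [MetricSpace X] (x y m : X) : Prop where
  dist_left : dist x m = dist x y / 2
  dist_right : dist m y = dist x y / 2

/-- A Busemann (convex) space: a geodesic metric space in which the midpoints of two sides of a
triangle are at most half as far apart as the endpoints of the third side. This is the midpoint form
of the condition that the distance between two geodesics is a convex function. -/
class BusemannSpace (X : Type*) [MetricSpace X] : Prop where
  geodesic : ∀ x y : X, ∃ γ : ℝ → X, GeodFromTo γ x y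
  dist_midpoints_le_half : ∀ {x y z m n : X}, IsMetricMidpoint x y m → IsMetricMidpoint x z n →
    dist m n ≤ dist y z / 2

section

variable {X : Type*} [MetricSpace X]

theorem IsMetricMidpoint.symm {x y m : X} (h : IsMetricMidpoint x y m) :
    IsMetricMidpoint y x m :=
  ⟨by rw [dist_comm, h.dist_right, dist_comm y], by rw [dist_comm, h.dist_left, dist_comm y]⟩

instance CAT0.busemannSpace [CAT0 X] : BusemannSpace X where
  geodesic := CAT0.geodesic
  dist_midpoints_le_half {x y z m n} hm hn := by
    have cn_n := CAT0.cn m x z n hn.dist_left hn.dist_right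
    have cn_m := CAT0.cn z x y m hm.dist_left hm.dist_right
    rw [dist_comm m x, hm.dist_left, dist_comm m z] at cn_n
    rw [dist_comm z x, dist_comm z y] at cn_m
    refine le_of_sq_le_sq ?_ (by positivity)
    linarith

namespace IsGeodesicOn

variable {γ : ℝ → X} {A B a b : ℝ}

theorem continuousOn (h : IsGeodesicOn γ A B) : ContinuousOn γ (Icc A B) :=
  (LipschitzOnWith.of_dist_le_mul (K := 1) fun s hs t ht => by
    simp [h s hs t ht, Real.dist_eq]).continuousOn

theorem isMetricMidpoint (h : IsGeodesicOn γ A B) (ha : a ∈ Icc A B) (hb : b ∈ Icc A B) :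
    IsMetricMidpoint (γ a) (γ b) (γ (midpoint ℝ a b)) := by
  have hm : midpoint ℝ a b ∈ Icc A B := (convex_Icc A B).midpoint_mem ha hb
  constructor
  · rw [h a ha _ hm, h a ha b hb, ← Real.dist_eq, ← Real.dist_eq, dist_left_midpoint,
      Real.norm_two, inv_mul_eq_div]
  · rw [h _ hm b hb, h a ha b hb, ← Real.dist_eq, ← Real.dist_eq, dist_midpoint_right,
      Real.norm_two, inv_mul_eq_div]

end IsGeodesicOn

theorem GeodFromTo.exists_isMetricMidpoint {γ : ℝ → X} {x y : X} (h : GeodFromTo γ x y) :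
    ∃ m, IsMetricMidpoint x y m := by
  have hm := h.1.isMetricMidpoint (left_mem_Icc.2 dist_nonneg) (right_mem_Icc.2 dist_nonneg)
  rw [h.2.1, h.2.2] at hm
  exact ⟨_, hm⟩

theorem BusemannSpace.dist_midpoints_le [BusemannSpace X] {x y x' y' m n : X}
    (hm : IsMetricMidpoint x y m) (hn : IsMetricMidpoint x' y' n) :
    dist m n ≤ (dist x x' + dist y y') / 2 := by
  obtain ⟨γ, hγ⟩ := BusemannSpace.geodesic x y'
  obtain ⟨d, hd⟩ := hγ.exists_isMetricMidpoint
  calc dist m n ≤ dist m d + dist d n := dist_triangle m d n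
    _ ≤ dist y y' / 2 + dist x x' / 2 :=
      add_le_add (dist_midpoints_le_half hm hd) (dist_midpoints_le_half hd.symm hn.symm)
    _ = (dist x x' + dist y y') / 2 := by ring

namespace IsGeodesicOn

variable [BusemannSpace X] {γ γ' : ℝ → X} {A B A' B' a b a' b' t : ℝ}

theorem convexOn_dist (h : IsGeodesicOn γ A B) (h' : IsGeodesicOn γ' A' B') :
    ConvexOn ℝ (Icc A B ×ˢ Icc A' B') fun p => dist (γ p.1) (γ' p.2) := by
  have hγ : ContinuousOn (fun p : ℝ × ℝ => γ p.1) (Icc A B ×ˢ Icc A' B') :=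
    h.continuousOn.comp continuousOn_fst fun _ hp => hp.1
  have hγ' : ContinuousOn (fun p : ℝ × ℝ => γ' p.2) (Icc A B ×ˢ Icc A' B') :=
    h'.continuousOn.comp continuousOn_snd fun _ hp => hp.2
  refine convexOn_of_midpoint_le ((convex_Icc A B).prod (convex_Icc A' B'))
    (continuous_dist.comp_continuousOn (hγ.prodMk hγ')) ?_
  rintro p ⟨hp, hp'⟩ q ⟨hq, hq'⟩
  exact BusemannSpace.dist_midpoints_le (h.isMetricMidpoint hp hq) (h'.isMetricMidpoint hp' hq')

theorem exists_dist_le_max (h : IsGeodesicOn γ A B) (h' : IsGeodesicOn γ' A' B')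
    (ha : a ∈ Icc A B) (hb : b ∈ Icc A B) (ha' : a' ∈ Icc A' B') (hb' : b' ∈ Icc A' B')
    (ht : t ∈ uIcc a b) :
    ∃ t' ∈ uIcc a' b', dist (γ t) (γ' t') ≤ max (dist (γ a) (γ' a')) (dist (γ b) (γ' b')) := by
  rw [← segment_eq_uIcc] at ht ⊢
  obtain ⟨u, v, hu, hv, huv, rfl⟩ := ht
  exact ⟨u • a' + v • b', ⟨u, v, hu, hv, huv, rfl⟩,
    (h.convexOn_dist h').le_max_of_mem_segment (x := (a, a')) (y := (b, b')) ⟨ha, ha'⟩ ⟨hb, hb'⟩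
      ⟨u, v, hu, hv, huv, rfl⟩⟩

theorem infDist_image_le_of_eq (h : IsGeodesicOn γ A B) (h' : IsGeodesicOn γ' A' B')
    (ha : a ∈ Icc A B) (hb : b ∈ Icc A B) (ha' : a' ∈ Icc A' B') (hb' : b' ∈ Icc A' B')
    (hab : γ a = γ' a') (ht : t ∈ uIcc a b) :
    infDist (γ t) (γ' '' Icc A' B') ≤ dist (γ b) (γ' b') := by
  obtain ⟨t', ht', hle⟩ := h.exists_dist_le_max h' ha hb ha' hb' ht
  rw [hab, dist_self, max_eq_right dist_nonneg] at hle
  exact (infDist_le_dist_of_mem (mem_image_of_mem γ' (uIcc_subset_Icc ha' hb' ht'))).trans hle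

end IsGeodesicOn

theorem geodSeg_nonempty (γ : ℝ → X) (x y : X) : (geodSeg γ x y).Nonempty :=
  (nonempty_Icc.2 dist_nonneg).image γ

theorem geodSeg_reverse (γ : ℝ → X) (x y : X) :
    geodSeg (fun t => γ (dist x y - t)) y x = geodSeg γ x y := by
  rw [geodSeg, geodSeg, ← image_image γ, image_const_sub_Icc, dist_comm y x, sub_self, sub_zero]

namespace GeodFromTo

variable {γ γ₁ γ₂ γ₃ : ℝ → X} {x y z a b c : X} {δ : ℝ}

theorem reverse (h : GeodFromTo γ x y) : GeodFromTo (fun t => γ (dist x y - t)) y x := by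
  obtain ⟨hγ, hx, hy⟩ := h
  refine ⟨fun s hs t ht => ?_, by simpa using hy, by simpa [dist_comm y x] using hx⟩
  rw [dist_comm y x] at hs ht
  rw [hγ _ ⟨sub_nonneg.2 hs.2, sub_le_self _ hs.1⟩ _ ⟨sub_nonneg.2 ht.2, sub_le_self _ ht.1⟩,
    sub_sub_sub_cancel_left, abs_sub_comm]

theorem isCompact_geodSeg (h : GeodFromTo γ x y) : IsCompact (geodSeg γ x y) :=
  isCompact_Icc.image_of_continuousOn h.1.continuousOn

theorem infDist_union_le [BusemannSpace X]
    (h₁ : GeodFromTo γ₁ x y) (h₂ : GeodFromTo γ₂ y z) (h₃ : GeodFromTo γ₃ z x)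
    (ha : a ∈ geodSeg γ₁ x y) (hb : b ∈ geodSeg γ₂ y z) (hc : c ∈ geodSeg γ₃ z x)
    (hab : dist a b ≤ δ) (hac : dist a c ≤ δ) :
    ∀ w ∈ geodSeg γ₁ x y, infDist w (geodSeg γ₂ y z ∪ geodSeg γ₃ z x) ≤ δ := by
  obtain ⟨r, hr, rfl⟩ := ha
  obtain ⟨s, hs, rfl⟩ := hb
  obtain ⟨q, hq, rfl⟩ := hc
  obtain ⟨g₁, hx₁, hy₁⟩ := h₁
  obtain ⟨g₂, hy₂, -⟩ := h₂
  obtain ⟨g₃, -, hx₃⟩ := h₃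
  rintro _ ⟨t, ht, rfl⟩
  rcases le_total t r with htr | hrt
  · have near_x : infDist (γ₁ t) (geodSeg γ₃ z x) ≤ dist (γ₁ r) (γ₃ q) :=
      g₁.infDist_image_le_of_eq g₃ (left_mem_Icc.2 dist_nonneg) hr (right_mem_Icc.2 dist_nonneg) hq
        (hx₁.trans hx₃.symm) (mem_uIcc_of_le ht.1 htr)
    exact (infDist_le_infDist_of_subset subset_union_right (geodSeg_nonempty ..)).trans
      (near_x.trans hac)
  · have near_y : infDist (γ₁ t) (geodSeg γ₂ y z) ≤ dist (γ₁ r) (γ₂ s) :=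
      g₁.infDist_image_le_of_eq g₂ (right_mem_Icc.2 dist_nonneg) hr (left_mem_Icc.2 dist_nonneg) hs
        (hy₁.trans hy₂.symm) (mem_uIcc_of_ge hrt ht.2)
    exact (infDist_le_infDist_of_subset subset_union_left (geodSeg_nonempty ..)).trans
      (near_y.trans hab)

theorem slimTri_of_dist_le [BusemannSpace X]
    (h₁ : GeodFromTo γ₁ x y) (h₂ : GeodFromTo γ₂ y z) (h₃ : GeodFromTo γ₃ z x)
    (ha : a ∈ geodSeg γ₁ x y) (hb : b ∈ geodSeg γ₂ y z) (hc : c ∈ geodSeg γ₃ z x)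
    (hab : dist a b ≤ δ) (hbc : dist b c ≤ δ) (hca : dist c a ≤ δ) :
    SlimTri δ (geodSeg γ₁ x y) (geodSeg γ₂ y z) (geodSeg γ₃ z x) := by
  refine ⟨infDist_union_le h₁ h₂ h₃ ha hb hc hab (dist_comm a c ▸ hca), ?_,
    infDist_union_le h₃ h₁ h₂ hc ha hb hca (dist_comm c b ▸ hbc)⟩
  rw [union_comm]
  exact infDist_union_le h₂ h₃ h₁ hb hc ha hbc (dist_comm b a ▸ hab)

end GeodFromTo

theorem SlimTri.mono {δ δ' : ℝ} {S₁ S₂ S₃ : Set X} (h : SlimTri δ S₁ S₂ S₃) (hδ : δ ≤ δ') :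
    SlimTri δ' S₁ S₂ S₃ :=
  ⟨fun z hz => (h.1 z hz).trans hδ, fun z hz => (h.2.1 z hz).trans hδ,
    fun z hz => (h.2.2 z hz).trans hδ⟩

theorem slim_of_proj_close_general [BusemannSpace X] {γ₁ γ₀ γ₂ : ℝ → X} {x y₁ y₂ o : X} {σ : ℝ}
    (h₁ : GeodFromTo γ₁ x y₁) (h₀ : GeodFromTo γ₀ y₁ y₂) (h₂ : GeodFromTo γ₂ y₂ x)
    (ho : o ∈ geodSeg γ₀ y₁ y₂) (ho₁ : infDist o (geodSeg γ₁ x y₁) ≤ σ)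
    (ho₂ : infDist o (geodSeg γ₂ y₂ x) ≤ σ) :
    SlimTri (2 * σ) (geodSeg γ₁ x y₁) (geodSeg γ₀ y₁ y₂) (geodSeg γ₂ y₂ x) := by
  obtain ⟨a, ha, hoa⟩ := h₁.isCompact_geodSeg.exists_infDist_eq_dist (geodSeg_nonempty ..) o
  obtain ⟨c, hc, hoc⟩ := h₂.isCompact_geodSeg.exists_infDist_eq_dist (geodSeg_nonempty ..) o
  rw [hoa] at ho₁
  rw [hoc] at ho₂
  have hσ : 0 ≤ σ := dist_nonneg.trans ho₁
  refine h₁.slimTri_of_dist_le h₀ h₂ ha ho hc ?_ ?_ ?_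
  · linarith [dist_comm o a]
  · linarith
  · linarith [dist_triangle_left c a o]

end

/-- Theorem 3.1, (3) ⇒ (4): if `dist (π_C x) [x,y] ≤ σ` for all `x ∈ X`, `y ∈ C`, then
for every `σ' > 2σ`, every triangle `[x,y₁] ∪ [y₁,y₂] ∪ [y₂,x]` with `y₁, y₂ ∈ C` and
`π_C x ∈ [y₁,y₂]` is `σ'`-slim. -/
theorem slim_of_proj_close
    {X : Type*} [MetricSpace X] [CAT0 X]
    (C : Set X) (hclosed : IsClosed C) (hconv : GeodConvex C)
    (p : X → X) (hp : IsClosestPointProj C p)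
    (σ : ℝ) (hσ : 0 ≤ σ)
    (hproj : ∀ x : X, ∀ y ∈ C, ∀ γ : ℝ → X, GeodFromTo γ x y →
      Metric.infDist (p x) (geodSeg γ x y) ≤ σ) :
    ∀ σ' : ℝ, 2 * σ < σ' →
      ∀ x : X, ∀ y₁ ∈ C, ∀ y₂ ∈ C, ∀ γ₁ γ₀ γ₂ : ℝ → X,
        GeodFromTo γ₁ x y₁ → GeodFromTo γ₀ y₁ y₂ → GeodFromTo γ₂ y₂ x →
        p x ∈ geodSeg γ₀ y₁ y₂ →
        SlimTri σ' (geodSeg γ₁ x y₁) (geodSeg γ₀ y₁ y₂) (geodSeg γ₂ y₂ x) := by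
  intro σ' hσ' x y₁ hy₁ y₂ hy₂ γ₁ γ₀ γ₂ h₁ h₀ h₂ hpx
  exact (slim_of_proj_close_general h₁ h₀ h₂ hpx (hproj x y₁ hy₁ γ₁ h₁)
    (geodSeg_reverse γ₂ y₂ x ▸ hproj x y₂ hy₂ _ h₂.reverse)).mono hσ'.le
end

section
/- Let X be a proper CAT(0) space, Γ ⊂ Isom(X) a non-elementary rank one discrete subgroup with finite critical exponent, and Γ₀ ⊂ Γ a subgroup acting cocompactly on a closed convex subset C ⊂ X. Then Γ₀ has infinite index in Γ if and only if δ(Γ₀) < δ(Γ). -/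
open Set Metric

/-- `r` is a unit-speed geodesic ray (parametrized on `[0,∞)`). -/
def IsGeodRay {X : Type*} [MetricSpace X] (r : ℝ → X) : Prop :=
  ∀ s t : ℝ, 0 ≤ s → 0 ≤ t → dist (r s) (r t) = |s - t|

/-- Two rays are asymptotic if they stay at bounded distance. -/
def AsympRay {X : Type*} [MetricSpace X] (r₁ r₂ : ℝ → X) : Prop :=
  ∃ M : ℝ, ∀ t : ℝ, 0 ≤ t → dist (r₁ t) (r₂ t) ≤ M

/-- `ℓ` bounds a (Euclidean) half-plane. -/
def BoundsHalfPlane {X : Type*} [MetricSpace X] (ℓ : ℝ → X) : Prop :=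
  ∃ f : ℝ × ℝ → X,
    (∀ p q : ℝ × ℝ, 0 ≤ p.2 → 0 ≤ q.2 →
      dist (f p) (f q) = Real.sqrt ((p.1 - q.1) ^ 2 + (p.2 - q.2) ^ 2)) ∧
    ∀ t : ℝ, f (t, 0) = ℓ t

/-- A subgroup of the isometry group is discrete (acts metrically properly):
orbit balls are finite. -/
def IsDiscreteSubgroup {X : Type*} [MetricSpace X] (Γ : Subgroup (X ≃ᵢ X)) : Prop :=
  ∀ x : X, ∀ R : ℝ, {g : Γ | dist ((g : X ≃ᵢ X) x) x ≤ R}.Finite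

/-- A subgroup has rank one if it contains an isometry translating a geodesic line
that does not bound a half-plane. -/
def RankOne {X : Type*} [MetricSpace X] (Γ : Subgroup (X ≃ᵢ X)) : Prop :=
  ∃ g ∈ Γ, ∃ ℓ : ℝ → X, IsGeodLine ℓ ∧ ¬ BoundsHalfPlane ℓ ∧
    ∃ τ : ℝ, 0 < τ ∧ ∀ t : ℝ, (g : X ≃ᵢ X) (ℓ t) = ℓ (t + τ)

/-- The orbit counting function of `Γ` at basepoint `o`. -/
noncomputable def orbitCount {X : Type*} [MetricSpace X]
    (Γ : Subgroup (X ≃ᵢ X)) (o : X) (R : ℝ) : ℕ :=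
  Nat.card {g : Γ | dist ((g : X ≃ᵢ X) o) o ≤ R}

/-- The critical exponent of `Γ`:
`δ(Γ) = limsup_{R → ∞} (1/R) log #{g ∈ Γ : dist (g o) o ≤ R}`. -/
noncomputable def critExp {X : Type*} [MetricSpace X]
    (Γ : Subgroup (X ≃ᵢ X)) (o : X) : ℝ :=
  Filter.limsup (fun R : ℝ => Real.log (orbitCount Γ o R) / R) Filter.atTop

/-- `Γ` has finite critical exponent. -/
def HasFiniteCritExp {X : Type*} [MetricSpace X]
    (Γ : Subgroup (X ≃ᵢ X)) (o : X) : Prop :=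
  ∃ a : ℝ, ∀ R : ℝ, 1 ≤ R → Real.log (orbitCount Γ o R) / R ≤ a

/-- The geodesic ray `r` from `o` represents a point of the limit set of `Γ`: it is
the limit of geodesic segments from `o` to orbit points going to infinity. -/
def InLimitSet {X : Type*} [MetricSpace X]
    (Γ : Subgroup (X ≃ᵢ X)) (o : X) (r : ℝ → X) : Prop :=
  IsGeodRay r ∧ r 0 = o ∧
  ∃ g : ℕ → X ≃ᵢ X, (∀ n, g n ∈ Γ) ∧
    Filter.Tendsto (fun n => dist o (g n o)) Filter.atTop Filter.atTop ∧
    ∃ γ : ℕ → ℝ → X, (∀ n, GeodFromTo (γ n) o (g n o)) ∧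
      ∀ t : ℝ, 0 ≤ t →
        Filter.Tendsto (fun n => γ n (min t (dist o (g n o)))) Filter.atTop (nhds (r t))

/-- `Γ` is non-elementary: its limit set contains at least three points (three
pairwise non-asymptotic rays). -/
def NonElementary {X : Type*} [MetricSpace X] (Γ : Subgroup (X ≃ᵢ X)) (o : X) : Prop :=
  ∃ r₁ r₂ r₃ : ℝ → X, InLimitSet Γ o r₁ ∧ InLimitSet Γ o r₂ ∧ InLimitSet Γ o r₃ ∧
    ¬ AsympRay r₁ r₂ ∧ ¬ AsympRay r₁ r₃ ∧ ¬ AsympRay r₂ r₃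

/-!
The axis `ℓ` of a rank one isometry `h` is contracting: were it not, points at unbounded height
above `ℓ` would give, after translating back by powers of `h`, arbitrarily large almost flat strips
along `ℓ`, hence in the limit a half-plane. Consequently, if `g C` has unbounded projection to `ℓ`,
then a half-line of `ℓ` stays near `g C`, and cocompactness shows that powers of `h⁻¹` or `h`
eventually move the coset `g Γ₀` into a fixed finite set of cosets, which therefore contains
`g Γ₀`. So infinite index yields a translate `g C` with bounded projection to `ℓ`, and a high power
of `h`, conjugated by `g`, becomes an isometry `f` which moves every point projecting to `C` far
from `o'` to one projecting to `C` near `o'`.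

If `T ⊆ Γ₀` moves `o'` to points far from each other and from `o'`, then the words
`γ₁ f γ₂ f ⋯ γₖ f` with `γᵢ ∈ T` are distinct by ping-pong. Orbit counts of a convex cocompact group
are almost submultiplicative, so by Fekete's lemma the Poincaré series of an infinite `Γ₀` diverges
at its exponent, and `T` can be chosen so that the letters `γ f` have total weight more than `1`
even at some `s > δ(Γ₀)`. The Poincaré series of `Γ` at `s` dominates every power of this weight,
so it diverges and `δ(Γ) ≥ s`.

If `Γ₀` is finite then `δ(Γ₀) ≤ 0`, and `δ(Γ) > 0` is the infinite case for the cyclic group of the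
axial isometry, which has infinite index because `Γ` is non-elementary.
-/

open Filter Topology

theorem le_max_of_midpoint_convex {f : ℝ → ℝ} {a b x : ℝ} (hf : ContinuousOn f (Icc a b))
    (hmid : ∀ s ∈ Icc a b, ∀ t ∈ Icc a b, f ((s + t) / 2) ≤ (f s + f t) / 2)
    (hx : x ∈ Icc a b) : f x ≤ max (f a) (f b) := by
  obtain ⟨m, hm, hmax⟩ := isCompact_Icc.exists_isMaxOn ⟨x, hx⟩ hf
  refine (hmax hx).trans ?_
  -- The leftmost maximum point must be an end point.
  let K := Icc a b ∩ f ⁻¹' {f m}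
  have hK : IsCompact K := isCompact_Icc.of_isClosed_subset
    (hf.preimage_isClosed_of_isClosed isClosed_Icc isClosed_singleton) inter_subset_left
  obtain ⟨⟨hap, hpb⟩, hfp⟩ : sInf K ∈ K := hK.sInf_mem ⟨m, hm, rfl⟩
  have hleft : ∀ q ∈ K, sInf K ≤ q := fun q hq => csInf_le hK.bddBelow hq
  generalize sInf K = p at *
  replace hfp : f p = f m := hfp
  rw [← hfp]
  rcases hap.eq_or_lt with rfl | hap
  · exact le_max_left _ _
  rcases hpb.eq_or_lt with rfl | hpb
  · exact le_max_right _ _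
  obtain ⟨d, hd, hdp⟩ : ∃ d > 0, d ≤ min (p - a) (b - p) :=
    ⟨_, lt_min (sub_pos.2 hap) (sub_pos.2 hpb), le_rfl⟩
  obtain ⟨hda, hdb⟩ := le_min_iff.1 hdp
  have hl : p - d ∈ Icc a b := ⟨by linarith, by linarith⟩
  have hr : p + d ∈ Icc a b := ⟨by linarith, by linarith⟩
  have hconv := hmid _ hl _ hr
  rw [show (p - d + (p + d)) / 2 = p by ring] at hconv
  have hfl : f (p - d) = f m :=
    (hmax hl).antisymm (by linarith [show f (p + d) ≤ f m from hmax hr])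
  linarith [hleft _ ⟨hl, hfl⟩]

section MetricBtw

variable {X : Type*} [MetricSpace X]

/-- Metric betweenness; in a CAT(0) space, `z` lies on the geodesic segment from `x` to `y`. -/
def MetricBtw (x z y : X) : Prop := dist x z + dist z y = dist x y

namespace MetricBtw

variable {x y z q : X}

theorem left (x y : X) : MetricBtw x x y := by simp [MetricBtw]

theorem symm (h : MetricBtw x z y) : MetricBtw y z x := by
  unfold MetricBtw at *
  rw [dist_comm y z, dist_comm z x, dist_comm y x]
  linarith

theorem trans_right (hz : MetricBtw x z y) (hq : MetricBtw z q y) : MetricBtw x q y := by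
  unfold MetricBtw at *
  linarith [dist_triangle x z q, dist_triangle x q y]

theorem middle_of_right (hz : MetricBtw x z y) (hq : MetricBtw z q y) : MetricBtw x z q := by
  unfold MetricBtw at *
  linarith [dist_triangle x z q, dist_triangle x q y]

theorem dist_left_le (h : MetricBtw x z y) : dist x z ≤ dist x y :=
  h ▸ le_add_of_nonneg_right dist_nonneg

theorem exists_fraction (h : MetricBtw x z y) :
    ∃ l ∈ Icc (0 : ℝ) 1, dist x z = l * dist x y ∧ dist z y = (1 - l) * dist x y := by
  have hxz := h.dist_left_le
  unfold MetricBtw at h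
  rcases (dist_nonneg (x := x) (y := y)).eq_or_lt with hxy | hxy
  · have := dist_nonneg (x := x) (y := z)
    have := dist_nonneg (x := z) (y := y)
    exact ⟨0, by simp, by linarith, by linarith⟩
  · refine ⟨dist x z / dist x y, ⟨by positivity, (div_le_one hxy).2 hxz⟩, by field_simp, ?_⟩
    field_simp
    linarith

end MetricBtw

end MetricBtw

namespace CAT0

variable {X : Type*} [MetricSpace X] [CAT0 X]

/-- The point of a geodesic from `x` to `y` at distance `l * dist x y` from `x`, for
`l ∈ [0, 1]`; other values of `l` carry no meaning. -/
noncomputable def lineMap (x y : X) (l : ℝ) : X :=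
  (CAT0.geodesic x y).choose (l * dist x y)

@[simp]
theorem lineMap_zero (x y : X) : lineMap x y 0 = x := by
  simpa [lineMap] using (CAT0.geodesic x y).choose_spec.2.1

@[simp]
theorem lineMap_one (x y : X) : lineMap x y 1 = y := by
  simpa [lineMap] using (CAT0.geodesic x y).choose_spec.2.2

variable {l m : ℝ}

theorem dist_lineMap_lineMap (x y : X) (hl : l ∈ Icc (0 : ℝ) 1) (hm : m ∈ Icc (0 : ℝ) 1) :
    dist (lineMap x y l) (lineMap x y m) = |l - m| * dist x y := by
  have hmem : ∀ k ∈ Icc (0 : ℝ) 1, k * dist x y ∈ Icc 0 (dist x y) := fun k hk =>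
    ⟨mul_nonneg hk.1 dist_nonneg, mul_le_of_le_one_left dist_nonneg hk.2⟩
  rw [lineMap, lineMap, (CAT0.geodesic x y).choose_spec.1 _ (hmem l hl) _ (hmem m hm), ← sub_mul,
    abs_mul, abs_of_nonneg dist_nonneg]

theorem dist_left_lineMap (x y : X) (hl : l ∈ Icc (0 : ℝ) 1) :
    dist x (lineMap x y l) = l * dist x y := by
  simpa [abs_of_nonneg hl.1] using dist_lineMap_lineMap x y (l := 0) (by simp) hl

theorem dist_lineMap_right (x y : X) (hl : l ∈ Icc (0 : ℝ) 1) :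
    dist (lineMap x y l) y = (1 - l) * dist x y := by
  simpa [abs_sub_comm l, abs_of_nonneg (sub_nonneg.2 hl.2)] using
    dist_lineMap_lineMap x y hl (m := 1) (by simp)

theorem continuousOn_lineMap (x y : X) : ContinuousOn (lineMap x y) (Icc 0 1) := by
  have : LipschitzOnWith (dist x y).toNNReal (lineMap x y) (Icc 0 1) :=
    LipschitzOnWith.of_dist_le_mul fun l hl m hm => by
      rw [dist_lineMap_lineMap x y hl hm, Real.coe_toNNReal _ dist_nonneg, Real.dist_eq, mul_comm]
  exact this.continuousOn

theorem metricBtw_lineMap (x y : X) (hl : l ∈ Icc (0 : ℝ) 1) : MetricBtw x (lineMap x y l) y := by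
  rw [MetricBtw, dist_left_lineMap x y hl, dist_lineMap_right x y hl]
  ring

theorem dist_lineMap_sq_le (p x y : X) (hl : l ∈ Icc (0 : ℝ) 1) :
    dist p (lineMap x y l) ^ 2 ≤
      (1 - l) * dist p x ^ 2 + l * dist p y ^ 2 - l * (1 - l) * dist x y ^ 2 := by
  have hcont := continuousOn_lineMap x y
  have hle := le_max_of_midpoint_convex (f := fun l => dist p (lineMap x y l) ^ 2 -
    ((1 - l) * dist p x ^ 2 + l * dist p y ^ 2 - l * (1 - l) * dist x y ^ 2))
    (by fun_prop) (fun s hs t ht => ?_) hl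
  · simpa using hle
  · have hst : (s + t) / 2 ∈ Icc (0 : ℝ) 1 :=
      ⟨by linarith [hs.1, ht.1], by linarith [hs.2, ht.2]⟩
    have hd := dist_lineMap_lineMap x y hs ht
    have hsm := dist_lineMap_lineMap x y hs hst
    have hmt := dist_lineMap_lineMap x y hst ht
    rw [show s - (s + t) / 2 = (s - t) / 2 by ring, abs_div, abs_two] at hsm
    rw [show (s + t) / 2 - t = (s - t) / 2 by ring, abs_div, abs_two] at hmt
    have hcn := CAT0.cn p (lineMap x y s) (lineMap x y t) (lineMap x y ((s + t) / 2))
      (by rw [hsm, hd]; ring) (by rw [hmt, hd]; ring)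
    rw [hd, mul_pow, sq_abs] at hcn
    linarith

theorem eq_lineMap {x y z : X} (hl : l ∈ Icc (0 : ℝ) 1) (hxz : dist x z = l * dist x y)
    (hzy : dist z y = (1 - l) * dist x y) : z = lineMap x y l := by
  have hle := dist_lineMap_sq_le z x y hl
  rw [dist_comm z x, hxz, hzy] at hle
  have hsq : dist z (lineMap x y l) ^ 2 ≤ 0 := by linarith
  exact dist_le_zero.1 (sq_nonpos_iff _ |>.1 hsq).le

theorem lineMap_symm (x y : X) (hl : l ∈ Icc (0 : ℝ) 1) :
    lineMap x y l = lineMap y x (1 - l) := by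
  refine eq_lineMap ⟨sub_nonneg.2 hl.2, sub_le_self _ hl.1⟩ ?_ ?_
  · rw [dist_comm, dist_lineMap_right x y hl, dist_comm x y]
  · rw [dist_comm, dist_left_lineMap x y hl, dist_comm x y]
    ring

theorem dist_lineMap_lineMap_le_of_left_eq (x y y' : X) (hl : l ∈ Icc (0 : ℝ) 1) :
    dist (lineMap x y l) (lineMap x y' l) ≤ l * dist y y' := by
  have hy' := dist_lineMap_sq_le (lineMap x y l) x y' hl
  have hy := dist_lineMap_sq_le y' x y hl
  rw [dist_comm (lineMap x y l) x, dist_left_lineMap x y hl] at hy'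
  rw [dist_comm y' (lineMap x y l), dist_comm y' x, dist_comm y' y] at hy
  refine (abs_le_of_sq_le_sq' ?_ (mul_nonneg hl.1 dist_nonneg)).2
  nlinarith [mul_le_mul_of_nonneg_left hy hl.1]

theorem dist_lineMap_lineMap_le (x y x' y' : X) (hl : l ∈ Icc (0 : ℝ) 1) :
    dist (lineMap x y l) (lineMap x' y' l) ≤ (1 - l) * dist x x' + l * dist y y' := by
  have hleft := dist_lineMap_lineMap_le_of_left_eq x y y' hl
  have hright := dist_lineMap_lineMap_le_of_left_eq y' x x'
    ⟨sub_nonneg.2 hl.2, sub_le_self _ hl.1⟩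
  rw [← lineMap_symm x y' hl, ← lineMap_symm x' y' hl] at hright
  linarith [dist_triangle (lineMap x y l) (lineMap x y' l) (lineMap x' y' l)]

theorem dist_sq_add_dist_sq_le (a b c d : X) :
    dist a c ^ 2 + dist b d ^ 2 ≤
      dist a b ^ 2 + dist b c ^ 2 + dist c d ^ 2 + dist d a ^ 2 := by
  have hhalf : (1 / 2 : ℝ) ∈ Icc (0 : ℝ) 1 := ⟨by norm_num, by norm_num⟩
  have hb := dist_lineMap_sq_le b a c hhalf
  have hd := dist_lineMap_sq_le d a c hhalf
  have htri := pow_le_pow_left₀ dist_nonneg (dist_triangle_right b d (lineMap a c (1 / 2))) 2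
  rw [dist_comm b a] at hb
  rw [dist_comm d c] at hd
  nlinarith [sq_nonneg (dist b (lineMap a c (1 / 2)) - dist d (lineMap a c (1 / 2)))]

end CAT0

theorem MetricBtw.eq_lineMap {X : Type*} [MetricSpace X] [CAT0 X] {x y z : X}
    (h : MetricBtw x z y) : ∃ l ∈ Icc (0 : ℝ) 1, z = CAT0.lineMap x y l := by
  obtain ⟨l, hl, hxz, hzy⟩ := h.exists_fraction
  exact ⟨l, hl, CAT0.eq_lineMap hl hxz hzy⟩

theorem GeodConvex.mem_of_metricBtw {X : Type*} [MetricSpace X] [CAT0 X] {C : Set X}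
    (hC : GeodConvex C) {x y z : X} (hx : x ∈ C) (hy : y ∈ C) (h : MetricBtw x z y) : z ∈ C := by
  obtain ⟨l, hl, rfl⟩ := h.eq_lineMap
  obtain ⟨hgeod, hleft, hright⟩ := (CAT0.geodesic x y).choose_spec
  exact hC _ 0 (dist x y) dist_nonneg hgeod (by rwa [hleft]) (by rwa [hright]) _
    ⟨mul_nonneg hl.1 dist_nonneg, mul_le_of_le_one_left dist_nonneg hl.2⟩

section NearestPoint

/-- `c` is a nearest-point projection of `x` to `C`. -/
def IsNearestPoint {X : Type*} [MetricSpace X] (C : Set X) (x c : X) : Prop :=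
  c ∈ C ∧ dist x c = infDist x C

namespace IsNearestPoint

variable {X : Type*} [MetricSpace X] {C : Set X} {x y c d : X}

theorem mem (h : IsNearestPoint C x c) : c ∈ C := h.1

theorem dist_eq (h : IsNearestPoint C x c) : dist x c = infDist x C := h.2

theorem dist_le (h : IsNearestPoint C x c) (hd : d ∈ C) : dist x c ≤ dist x d :=
  h.dist_eq.trans_le (infDist_le_dist_of_mem hd)

theorem of_forall_dist_le (hc : c ∈ C) (h : ∀ d ∈ C, dist x c ≤ dist x d) :
    IsNearestPoint C x c :=
  ⟨hc, ((le_infDist ⟨c, hc⟩).2 fun _ hd => h _ hd).antisymm (infDist_le_dist_of_mem hc)⟩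

theorem exists_of_isClosed [ProperSpace X] (hC : IsClosed C) (hne : C.Nonempty) (x : X) :
    ∃ c, IsNearestPoint C x c := by
  obtain ⟨c, hc, h⟩ := hC.exists_infDist_eq_dist hne x
  exact ⟨c, hc, h.symm⟩

theorem map (g : X ≃ᵢ X) (h : IsNearestPoint C x c) : IsNearestPoint (g '' C) (g x) (g c) :=
  ⟨mem_image_of_mem g h.mem, by rw [g.dist_eq, infDist_image g.isometry, h.dist_eq]⟩

theorem of_metricBtw {z : X} (h : IsNearestPoint C x c) (hz : MetricBtw c z x) :
    IsNearestPoint C z c :=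
  of_forall_dist_le h.mem fun d hd => by
    have hcd := h.dist_le hd
    rw [MetricBtw, dist_comm c z, dist_comm c x] at hz
    linarith [dist_triangle_left x d z]

variable [CAT0 X]

theorem sq_add_sq_le (hC : GeodConvex C) (h : IsNearestPoint C x c) (hd : d ∈ C) :
    dist x c ^ 2 + dist c d ^ 2 ≤ dist x d ^ 2 := by
  have hbound : ∀ l ∈ Ioo (0 : ℝ) 1,
      dist x c ^ 2 + dist c d ^ 2 - l * dist c d ^ 2 ≤ dist x d ^ 2 := by
    intro l hl
    have hmem := Ioo_subset_Icc_self hl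
    have hstewart := CAT0.dist_lineMap_sq_le x c d hmem
    have hle := pow_le_pow_left₀ dist_nonneg
      (h.dist_le (hC.mem_of_metricBtw h.mem hd (CAT0.metricBtw_lineMap c d hmem))) 2
    exact le_of_mul_le_mul_left (by linarith) hl.1
  have hlim : Tendsto (fun l : ℝ => dist x c ^ 2 + dist c d ^ 2 - l * dist c d ^ 2)
      (𝓝[>] 0) (𝓝 (dist x c ^ 2 + dist c d ^ 2 - 0 * dist c d ^ 2)) :=
    (Continuous.tendsto (by fun_prop) 0).mono_left nhdsWithin_le_nhds
  have := le_of_tendsto hlim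
    (mem_of_superset (Ioo_mem_nhdsGT (zero_lt_one' ℝ)) hbound)
  linarith

theorem dist_le_dist (hC : GeodConvex C) (hx : IsNearestPoint C x c) (hy : IsNearestPoint C y d) :
    dist c d ≤ dist x y := by
  have hxd := hx.sq_add_sq_le hC hy.mem
  have hyc := hy.sq_add_sq_le hC hx.mem
  have hquad := CAT0.dist_sq_add_dist_sq_le x c d y
  rw [dist_comm c y, dist_comm d y, dist_comm y x] at hquad
  rw [dist_comm d c] at hyc
  exact abs_le_of_sq_le_sq' (by linarith) dist_nonneg |>.2

theorem unique (hC : GeodConvex C) (hc : IsNearestPoint C x c) (hd : IsNearestPoint C x d) :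
    c = d :=
  dist_le_zero.1 ((hc.dist_le_dist hC hd).trans_eq (dist_self x))

end IsNearestPoint

end NearestPoint

section InfDist

variable {X : Type*} [MetricSpace X] {C : Set X}

theorem abs_infDist_sub_infDist_le (x y : X) (C : Set X) :
    |infDist x C - infDist y C| ≤ dist x y := by
  simpa [Real.dist_eq] using (lipschitz_infDist_pt C).dist_le_mul x y

theorem div_infDist_mem_Icc {x : X} {u : ℝ} (hu : u ∈ Icc 0 (infDist x C)) :
    u / infDist x C ∈ Icc (0 : ℝ) 1 :=
  ⟨div_nonneg hu.1 infDist_nonneg, div_le_one_of_le₀ hu.2 infDist_nonneg⟩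

end InfDist

section GeodLine

variable {X : Type*} [MetricSpace X] {ℓ : ℝ → X}

namespace IsGeodLine

theorem isometry (hℓ : IsGeodLine ℓ) : Isometry ℓ :=
  Isometry.of_dist_eq fun s t => by rw [hℓ, Real.dist_eq]

theorem isClosed_range (hℓ : IsGeodLine ℓ) : IsClosed (range ℓ) :=
  hℓ.isometry.isClosedEmbedding.isClosed_range

theorem exists_isNearestPoint (hℓ : IsGeodLine ℓ) (x : X) :
    ∃ t, IsNearestPoint (range ℓ) x (ℓ t) := by
  have hlim : Tendsto (fun s => dist x (ℓ s)) (cocompact ℝ) atTop := by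
    rw [tendsto_dist_left_atTop_iff, ← cobounded_eq_cocompact]
    exact hℓ.isometry.antilipschitz.tendsto_cobounded
  obtain ⟨t, ht⟩ := (continuous_const.dist hℓ.isometry.continuous).exists_forall_le hlim
  exact ⟨t, .of_forall_dist_le (mem_range_self t) (forall_mem_range.2 ht)⟩

variable [CAT0 X]

theorem apply_eq_lineMap (hℓ : IsGeodLine ℓ) (u v : ℝ) {l : ℝ} (hl : l ∈ Icc (0 : ℝ) 1) :
    ℓ (u + l * (v - u)) = CAT0.lineMap (ℓ u) (ℓ v) l := by
  refine CAT0.eq_lineMap hl ?_ ?_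
  · rw [hℓ, hℓ, show u - (u + l * (v - u)) = l * (u - v) by ring, abs_mul, abs_of_nonneg hl.1]
  · rw [hℓ, hℓ, show u + l * (v - u) - v = (1 - l) * (u - v) by ring, abs_mul,
      abs_of_nonneg (sub_nonneg.2 hl.2)]

theorem geodConvex_range (hℓ : IsGeodLine ℓ) : GeodConvex (range ℓ) := by
  rintro γ a b hab hγ ⟨u, hu⟩ ⟨v, hv⟩ t ht
  have hbtw : MetricBtw (ℓ u) (γ t) (ℓ v) := by
    rw [hu, hv, MetricBtw, hγ a ⟨le_rfl, hab⟩ t ht, hγ t ht b ⟨hab, le_rfl⟩,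
      hγ a ⟨le_rfl, hab⟩ b ⟨hab, le_rfl⟩, abs_of_nonpos (sub_nonpos.2 ht.1),
      abs_of_nonpos (sub_nonpos.2 ht.2), abs_of_nonpos (sub_nonpos.2 hab)]
    ring
  obtain ⟨l, hl, h⟩ := hbtw.eq_lineMap
  exact ⟨_, (hℓ.apply_eq_lineMap u v hl).trans h.symm⟩

end IsGeodLine

/-- The parameter of the nearest point to `x` on the line `ℓ`; the height of `x` above `ℓ` is
`infDist x (range ℓ)`. -/
noncomputable def projParam (ℓ : ℝ → X) (x : X) : ℝ :=
  Classical.epsilon fun t => IsNearestPoint (range ℓ) x (ℓ t)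

namespace IsGeodLine

theorem isNearestPoint_projParam (hℓ : IsGeodLine ℓ) (x : X) :
    IsNearestPoint (range ℓ) x (ℓ (projParam ℓ x)) :=
  Classical.epsilon_spec (hℓ.exists_isNearestPoint x)

theorem dist_projParam (hℓ : IsGeodLine ℓ) (x : X) :
    dist (ℓ (projParam ℓ x)) x = infDist x (range ℓ) := by
  rw [dist_comm, (hℓ.isNearestPoint_projParam x).dist_eq]

variable [CAT0 X]

theorem projParam_eq (hℓ : IsGeodLine ℓ) {x : X} {t : ℝ}
    (h : IsNearestPoint (range ℓ) x (ℓ t)) : projParam ℓ x = t :=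
  hℓ.isometry.injective ((hℓ.isNearestPoint_projParam x).unique hℓ.geodConvex_range h)

theorem abs_projParam_sub_le (hℓ : IsGeodLine ℓ) (x y : X) :
    |projParam ℓ x - projParam ℓ y| ≤ dist x y := by
  rw [← hℓ]
  exact (hℓ.isNearestPoint_projParam x).dist_le_dist hℓ.geodConvex_range
    (hℓ.isNearestPoint_projParam y)

theorem continuous_projParam (hℓ : IsGeodLine ℓ) : Continuous (projParam ℓ) :=
  (LipschitzWith.of_dist_le_mul (K := 1) fun x y => by
    simpa [Real.dist_eq] using hℓ.abs_projParam_sub_le x y).continuous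

theorem infDist_sq_add_sq_le (hℓ : IsGeodLine ℓ) (x : X) (t : ℝ) :
    infDist x (range ℓ) ^ 2 + (projParam ℓ x - t) ^ 2 ≤ dist x (ℓ t) ^ 2 := by
  rw [← (hℓ.isNearestPoint_projParam x).dist_eq, ← sq_abs (_ - _), ← hℓ]
  exact (hℓ.isNearestPoint_projParam x).sq_add_sq_le hℓ.geodConvex_range (mem_range_self t)

theorem exists_metricBtw_projParam_eq (hℓ : IsGeodLine ℓ) {x y : X} {t : ℝ}
    (ht : t ∈ Icc (projParam ℓ x) (projParam ℓ y)) : ∃ z, MetricBtw x z y ∧ projParam ℓ z = t := by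
  have hcont : ContinuousOn (fun l => projParam ℓ (CAT0.lineMap x y l)) (Icc 0 1) :=
    hℓ.continuous_projParam.comp_continuousOn (CAT0.continuousOn_lineMap x y)
  obtain ⟨l, hl, hlt⟩ := intermediate_value_Icc zero_le_one hcont
    (show t ∈ Icc _ _ by simpa using ht)
  exact ⟨_, CAT0.metricBtw_lineMap x y hl, hlt⟩

end IsGeodLine

/-- `g` acts on the line `ℓ` as the translation by `τ`. -/
def TranslatesLine (g : X ≃ᵢ X) (ℓ : ℝ → X) (τ : ℝ) : Prop :=
  ∀ t, g (ℓ t) = ℓ (t + τ)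

namespace TranslatesLine

variable {g : X ≃ᵢ X} {τ : ℝ}

theorem pow (h : TranslatesLine g ℓ τ) (n : ℕ) : TranslatesLine (g ^ n) ℓ (n * τ) := by
  induction n with
  | zero => intro t; simp
  | succ n ih =>
    intro t
    rw [pow_succ, IsometryEquiv.mul_apply, h, ih]
    congr 1
    push_cast
    ring

theorem inv (h : TranslatesLine g ℓ τ) : TranslatesLine g⁻¹ ℓ (-τ) := fun t => by
  rw [← g.injective.eq_iff, IsometryEquiv.apply_inv_self, h, neg_add_cancel_right]

theorem zpow (h : TranslatesLine g ℓ τ) (n : ℤ) : TranslatesLine (g ^ n) ℓ (n * τ) := by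
  obtain ⟨k, rfl | rfl⟩ := n.eq_nat_or_neg
  · simpa using h.pow k
  · simpa using (h.pow k).inv

theorem image_range (h : TranslatesLine g ℓ τ) : g '' range ℓ = range ℓ := by
  rw [← range_comp, show g ∘ ℓ = ℓ ∘ (· + τ) from funext h]
  exact (Equiv.addRight τ).surjective.range_comp ℓ

theorem infDist_apply (h : TranslatesLine g ℓ τ) (x : X) :
    infDist (g x) (range ℓ) = infDist x (range ℓ) := by
  nth_rw 1 [← h.image_range, infDist_image g.isometry]

theorem projParam_apply [CAT0 X] (hℓ : IsGeodLine ℓ) (h : TranslatesLine g ℓ τ) (x : X) :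
    projParam ℓ (g x) = projParam ℓ x + τ :=
  hℓ.projParam_eq <| by
    simpa only [h.image_range, h _] using (hℓ.isNearestPoint_projParam x).map g

end TranslatesLine

end GeodLine

section Perpendicular

variable {X : Type*} [MetricSpace X] [CAT0 X] {ℓ : ℝ → X}

/-- The point at height `u` on the perpendicular from `x` to the line `ℓ`, for `u` between `0` and
the height of `x`. -/
noncomputable def perpPoint (ℓ : ℝ → X) (x : X) (u : ℝ) : X :=
  CAT0.lineMap (ℓ (projParam ℓ x)) x (u / infDist x (range ℓ))

@[simp]
theorem perpPoint_zero (ℓ : ℝ → X) (x : X) : perpPoint ℓ x 0 = ℓ (projParam ℓ x) := by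
  simp [perpPoint]

namespace IsGeodLine

variable {x y : X} {u v : ℝ}

theorem dist_perpPoint_perpPoint (hℓ : IsGeodLine ℓ) (hu : u ∈ Icc 0 (infDist x (range ℓ)))
    (hv : v ∈ Icc 0 (infDist x (range ℓ))) :
    dist (perpPoint ℓ x u) (perpPoint ℓ x v) = |u - v| := by
  rw [perpPoint, perpPoint, CAT0.dist_lineMap_lineMap _ _ (div_infDist_mem_Icc hu)
    (div_infDist_mem_Icc hv), hℓ.dist_projParam, ← sub_div, abs_div, abs_of_nonneg infDist_nonneg]
  refine div_mul_cancel_of_imp fun h => ?_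
  rw [h, Icc_self, mem_singleton_iff] at hu hv
  simp [hu, hv]

theorem isNearestPoint_perpPoint (hℓ : IsGeodLine ℓ) (hu : u ∈ Icc 0 (infDist x (range ℓ))) :
    IsNearestPoint (range ℓ) (perpPoint ℓ x u) (ℓ (projParam ℓ x)) :=
  (hℓ.isNearestPoint_projParam x).of_metricBtw
    (CAT0.metricBtw_lineMap _ _ (div_infDist_mem_Icc hu))

theorem projParam_perpPoint (hℓ : IsGeodLine ℓ) (hu : u ∈ Icc 0 (infDist x (range ℓ))) :
    projParam ℓ (perpPoint ℓ x u) = projParam ℓ x :=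
  hℓ.projParam_eq (hℓ.isNearestPoint_perpPoint hu)

theorem infDist_perpPoint (hℓ : IsGeodLine ℓ) (hu : u ∈ Icc 0 (infDist x (range ℓ))) :
    infDist (perpPoint ℓ x u) (range ℓ) = u := by
  rw [← (hℓ.isNearestPoint_perpPoint hu).dist_eq, ← perpPoint_zero ℓ x,
    hℓ.dist_perpPoint_perpPoint hu ⟨le_rfl, infDist_nonneg⟩, sub_zero, abs_of_nonneg hu.1]

/-- Convexity of the distance bounds the distance at equal fractions of the two perpendiculars;
the second summand accounts for the difference of their lengths. -/
theorem dist_perpPoint_le (hℓ : IsGeodLine ℓ) (hu : 0 ≤ u) (hux : u < infDist x (range ℓ))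
    (huy : u < infDist y (range ℓ)) :
    dist (perpPoint ℓ x u) (perpPoint ℓ y u) ≤ dist x y * (1 + u / infDist x (range ℓ)) := by
  have hx : 0 < infDist x (range ℓ) := hu.trans_lt hux
  have hy : 0 < infDist y (range ℓ) := hu.trans_lt huy
  set a := infDist x (range ℓ) with ha
  set b := infDist y (range ℓ) with hb
  have hua : u / a ∈ Icc (0 : ℝ) 1 := div_infDist_mem_Icc ⟨hu, hux.le⟩
  have hub : u / b ∈ Icc (0 : ℝ) 1 := div_infDist_mem_Icc ⟨hu, huy.le⟩
  have hconv := CAT0.dist_lineMap_lineMap_le (ℓ (projParam ℓ x)) x (ℓ (projParam ℓ y)) y hua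
  have hfeet := mul_le_mul_of_nonneg_left (hℓ.abs_projParam_sub_le x y) (sub_nonneg.2 hua.2)
  have hlengths : |u / a - u / b| * b ≤ u / a * dist x y := by
    have hab : u / a - u / b = u * (b - a) / (a * b) := by field_simp
    rw [hab, abs_div, abs_mul, abs_of_nonneg hu, abs_of_pos (mul_pos hx hy), abs_sub_comm,
      div_mul_eq_mul_div, div_mul_eq_mul_div, mul_div_mul_right _ _ hy.ne']
    gcongr
    exact abs_infDist_sub_infDist_le x y _
  have hshift := CAT0.dist_lineMap_lineMap (ℓ (projParam ℓ y)) y hua hub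
  rw [hℓ.dist_projParam, ← hb] at hshift
  rw [hℓ] at hconv
  have htri := dist_triangle (perpPoint ℓ x u) (CAT0.lineMap (ℓ (projParam ℓ y)) y (u / a))
    (perpPoint ℓ y u)
  rw [perpPoint, perpPoint, ← ha, ← hb] at htri ⊢
  linarith

end IsGeodLine

end Perpendicular

section HalfPlane

variable {X : Type*} [MetricSpace X] {ℓ : ℝ → X}

/-- `F` is a family of rays `F t` perpendicular to the line `ℓ` at `ℓ t`, any two of which stay at
the distance of their feet; the flat strips between these rays fill a half-plane. -/
structure IsParallelPerpendiculars (ℓ : ℝ → X) (F : ℝ → ℝ → X) : Prop where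
  zero : ∀ t, F t 0 = ℓ t
  dist_ray : ∀ t u v, 0 ≤ u → 0 ≤ v → dist (F t u) (F t v) = |u - v|
  dist_le : ∀ s t u, 0 ≤ u → dist (F s u) (F t u) ≤ |s - t|
  isNearestPoint : ∀ t u, 0 ≤ u → IsNearestPoint (range ℓ) (F t u) (ℓ t)

namespace IsParallelPerpendiculars

variable {F : ℝ → ℝ → X} {u v : ℝ}

theorem dist_foot (hF : IsParallelPerpendiculars ℓ F) (t : ℝ) (hu : 0 ≤ u) :
    dist (F t u) (ℓ t) = u := by
  rw [← hF.zero, hF.dist_ray t u 0 hu le_rfl, sub_zero, abs_of_nonneg hu]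

variable [CAT0 X]

theorem dist_eq (hF : IsParallelPerpendiculars ℓ F) (hℓ : IsGeodLine ℓ) (s t : ℝ) (hu : 0 ≤ u) :
    dist (F s u) (F t u) = |s - t| :=
  (hF.dist_le s t u hu).antisymm <| by
    rw [← hℓ]
    exact (hF.isNearestPoint s u hu).dist_le_dist hℓ.geodConvex_range (hF.isNearestPoint t u hu)

theorem dist_base_sq_le (hF : IsParallelPerpendiculars ℓ F) (hℓ : IsGeodLine ℓ) (s t : ℝ)
    (hu : 0 ≤ u) : dist (F t u) (ℓ s) ^ 2 ≤ (t - s) ^ 2 + u ^ 2 := by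
  have hangle := (hF.isNearestPoint s u hu).sq_add_sq_le hℓ.geodConvex_range (mem_range_self t)
  have hquad := CAT0.dist_sq_add_dist_sq_le (F t u) (ℓ t) (ℓ s) (F s u)
  rw [hF.dist_foot t hu, dist_comm (ℓ s), hF.dist_foot s hu, hℓ, sq_abs, hF.dist_eq hℓ s t hu,
    sq_abs, dist_comm (ℓ t)] at hquad
  rw [hF.dist_foot s hu, hℓ, sq_abs] at hangle
  linarith

theorem dist_sq_le_of_le (hF : IsParallelPerpendiculars ℓ F) (hℓ : IsGeodLine ℓ) (s t : ℝ)
    (hv : 0 ≤ v) (hvu : v ≤ u) : dist (F t u) (F s v) ^ 2 ≤ (t - s) ^ 2 + (u - v) ^ 2 := by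
  rcases hv.eq_or_lt with rfl | hv0
  · rw [hF.zero, sub_zero]
    exact hF.dist_base_sq_le hℓ s t hvu
  have hu : 0 < u := hv0.trans_le hvu
  have hmem : v / u ∈ Icc (0 : ℝ) 1 := ⟨by positivity, (div_le_one hu).2 hvu⟩
  have hlen : dist (ℓ s) (F s u) = u := by rw [dist_comm, hF.dist_foot s hu.le]
  have hpoint : F s v = CAT0.lineMap (ℓ s) (F s u) (v / u) := by
    refine CAT0.eq_lineMap hmem ?_ ?_
    · rw [hlen, dist_comm, hF.dist_foot s hv, div_mul_cancel₀ _ hu.ne']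
    · rw [hlen, hF.dist_ray s v u hv hu.le, abs_sub_comm, abs_of_nonneg (sub_nonneg.2 hvu)]
      field_simp
  have hstewart := CAT0.dist_lineMap_sq_le (F t u) (ℓ s) (F s u) hmem
  rw [← hpoint, hlen, hF.dist_eq hℓ t s hu.le, sq_abs] at hstewart
  calc dist (F t u) (F s v) ^ 2
      ≤ (1 - v / u) * ((t - s) ^ 2 + u ^ 2) + v / u * (t - s) ^ 2 -
          v / u * (1 - v / u) * u ^ 2 := by
        linarith [mul_le_mul_of_nonneg_left (hF.dist_base_sq_le hℓ s t hu.le)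
          (sub_nonneg.2 hmem.2)]
    _ = (t - s) ^ 2 + (u - v) ^ 2 := by field_simp; ring

/-- If `F t u` were too close to `F s v`, then it would be too far from the reflection of `F s v`
in `F s u`. -/
theorem le_dist_sq_of_le (hF : IsParallelPerpendiculars ℓ F) (hℓ : IsGeodLine ℓ) (s t : ℝ)
    (hv : 0 ≤ v) (hvu : v ≤ u) : (t - s) ^ 2 + (u - v) ^ 2 ≤ dist (F t u) (F s v) ^ 2 := by
  have hu : 0 ≤ u := hv.trans hvu
  have hw : 0 ≤ 2 * u - v := by linarith
  have hdist_vw : dist (F s v) (F s (2 * u - v)) = 2 * (u - v) := by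
    rw [hF.dist_ray s v _ hv hw, abs_of_nonpos (by linarith)]
    ring
  have hcn := CAT0.cn (F t u) (F s v) (F s (2 * u - v)) (F s u)
    (by rw [hdist_vw, hF.dist_ray s v u hv hu, abs_of_nonpos (by linarith)]; ring)
    (by rw [hdist_vw, hF.dist_ray s u _ hu hw, abs_of_nonpos (by linarith)]; ring)
  have hfar := hF.dist_sq_le_of_le hℓ t s hu (show u ≤ 2 * u - v by linarith)
  rw [dist_comm (F s _) (F t u)] at hfar
  rw [hF.dist_eq hℓ t s hu, sq_abs, hdist_vw] at hcn
  linarith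

theorem dist_sq (hF : IsParallelPerpendiculars ℓ F) (hℓ : IsGeodLine ℓ) (s t : ℝ) (hu : 0 ≤ u)
    (hv : 0 ≤ v) : dist (F s u) (F t v) ^ 2 = (s - t) ^ 2 + (u - v) ^ 2 := by
  rcases le_total v u with h | h
  · exact (hF.dist_sq_le_of_le hℓ t s hv h).antisymm (hF.le_dist_sq_of_le hℓ t s hv h)
  · rw [dist_comm, sub_sq_comm s, sub_sq_comm u]
    exact (hF.dist_sq_le_of_le hℓ s t hu h).antisymm (hF.le_dist_sq_of_le hℓ s t hu h)

theorem boundsHalfPlane (hF : IsParallelPerpendiculars ℓ F) (hℓ : IsGeodLine ℓ) :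
    BoundsHalfPlane ℓ :=
  ⟨fun p => F p.1 p.2, fun p q hp hq => by
    rw [← hF.dist_sq hℓ p.1 q.1 hp hq, Real.sqrt_sq dist_nonneg], hF.zero⟩

end IsParallelPerpendiculars

theorem IsNearestPoint.of_tendsto {ι : Type*} {U : Filter ι} [U.NeBot] {C : Set X} {f : ι → X}
    {x c : X} (hf : Tendsto f U (𝓝 x)) (h : ∀ᶠ n in U, IsNearestPoint C (f n) c) :
    IsNearestPoint C x c := by
  obtain ⟨n, hn⟩ := h.exists
  refine ⟨hn.mem, tendsto_nhds_unique (hf.dist tendsto_const_nhds) ?_⟩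
  exact (((continuous_infDist_pt C).tendsto x).comp hf).congr' (h.mono fun n hn => hn.dist_eq.symm)

variable [CAT0 X]

theorem IsGeodLine.exists_tendsto_perpPoint [ProperSpace X] (hℓ : IsGeodLine ℓ) {ι : Type*}
    (U : Ultrafilter ι) {z : ι → X} {t u : ℝ} (ht : ∀ᶠ n in U, projParam ℓ (z n) = t)
    (hu : 0 ≤ u) (hheight : ∀ᶠ n in U, u ≤ infDist (z n) (range ℓ)) :
    ∃ p, Tendsto (fun n => perpPoint ℓ (z n) u) U (𝓝 p) := by
  have hball : ∀ᶠ n in U, perpPoint ℓ (z n) u ∈ closedBall (ℓ t) u := by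
    filter_upwards [ht, hheight] with n hn hnu
    rw [mem_closedBall, ← hn, (hℓ.isNearestPoint_perpPoint ⟨hu, hnu⟩).dist_eq,
      hℓ.infDist_perpPoint ⟨hu, hnu⟩]
  obtain ⟨p, -, hp⟩ := (isCompact_closedBall (ℓ t) u).ultrafilter_le_nhds
    (U.map fun n => perpPoint ℓ (z n) u) (le_principal_iff.2 hball)
  exact ⟨p, hp⟩

/-- The limits of the perpendiculars dropped from the points `z n t` are parallel. -/
theorem IsGeodLine.boundsHalfPlane_of_tendsto [ProperSpace X] (hℓ : IsGeodLine ℓ) {ι : Type*}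
    {U : Filter ι} [U.NeBot] {z : ι → ℝ → X} (hproj : ∀ t, ∀ᶠ n in U, projParam ℓ (z n t) = t)
    (hheight : ∀ t, Tendsto (fun n => infDist (z n t) (range ℓ)) U atTop)
    (hdist : ∀ s t c, |s - t| < c → ∀ᶠ n in U, dist (z n s) (z n t) ≤ c) :
    BoundsHalfPlane ℓ := by
  have hV : (Ultrafilter.of U : Filter ι) ≤ U := Ultrafilter.of_le U
  generalize Ultrafilter.of U = V at hV
  have hhigh : ∀ t u, ∀ᶠ n in V, u < infDist (z n t) (range ℓ) := fun t u =>
    hV ((hheight t).eventually_gt_atTop u)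
  have : Nonempty X := ⟨ℓ 0⟩
  let F : ℝ → ℝ → X := fun t u => limUnder V fun n => perpPoint ℓ (z n t) u
  have hF : ∀ t u, 0 ≤ u → Tendsto (fun n => perpPoint ℓ (z n t) u) V (𝓝 (F t u)) :=
    fun t u hu => tendsto_nhds_limUnder <|
      hℓ.exists_tendsto_perpPoint V (hV (hproj t)) hu ((hhigh t u).mono fun _ => le_of_lt)
  refine IsParallelPerpendiculars.boundsHalfPlane (F := F) ⟨fun t => ?_, fun t u v hu hv => ?_,
    fun s t u hu => le_of_forall_gt_imp_ge_of_dense fun c hc => ?_, fun t u hu => ?_⟩ hℓ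
  · refine tendsto_nhds_unique (hF t 0 le_rfl) (tendsto_const_nhds.congr' ?_)
    filter_upwards [hV (hproj t)] with n hn
    rw [perpPoint_zero, hn]
  · refine tendsto_nhds_unique ((hF t u hu).dist (hF t v hv)) (tendsto_const_nhds.congr' ?_)
    filter_upwards [hhigh t u, hhigh t v] with n hnu hnv
    rw [hℓ.dist_perpPoint_perpPoint ⟨hu, hnu.le⟩ ⟨hv, hnv.le⟩]
  · have hbound : Tendsto (fun n => c * (1 + u / infDist (z n s) (range ℓ))) V
        (𝓝 (c * (1 + 0))) :=
      ((((hheight s).mono_left hV).const_div_atTop u).const_add 1).const_mul c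
    rw [add_zero, mul_one] at hbound
    refine le_of_tendsto_of_tendsto ((hF s u hu).dist (hF t u hu)) hbound ?_
    filter_upwards [hhigh s u, hhigh t u, hV (hdist s t c hc)] with n hs ht hst
    refine (hℓ.dist_perpPoint_le hu hs ht).trans (mul_le_mul_of_nonneg_right hst ?_)
    have := infDist_nonneg (x := z n s) (s := range ℓ)
    positivity
  · refine .of_tendsto (hF t u hu) ?_
    filter_upwards [hV (hproj t), hhigh t u] with n hn hnu
    simpa only [hn] using hℓ.isNearestPoint_perpPoint ⟨hu, hnu.le⟩

end HalfPlane

section Excess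

variable {X : Type*} [MetricSpace X] [CAT0 X] {ℓ : ℝ → X}

/-- High above `ℓ`, two points whose projections are `K` apart are at distance at least `K + ε`. -/
def HasExcess (ℓ : ℝ → X) (K ε : ℝ) : Prop :=
  ∀ x y, 2 * K ≤ infDist x (range ℓ) → 2 * K ≤ infDist y (range ℓ) →
    projParam ℓ y = projParam ℓ x + K → K + ε ≤ dist x y

theorem IsGeodLine.dist_le_of_thin (hℓ : IsGeodLine ℓ) {x y z w : X} {e : ℝ}
    (hxy : dist x y ≤ projParam ℓ y - projParam ℓ x + e) (hz : MetricBtw x z y)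
    (hw : MetricBtw x w y) : dist z w ≤ |projParam ℓ z - projParam ℓ w| + e := by
  obtain ⟨l, hl, rfl⟩ := hz.eq_lineMap
  obtain ⟨m, hm, rfl⟩ := hw.eq_lineMap
  wlog hlm : l ≤ m generalizing l m
  · rw [dist_comm, abs_sub_comm]
    exact this m hm hw l hl hz (le_of_not_ge hlm)
  have hleft := hℓ.abs_projParam_sub_le x (CAT0.lineMap x y l)
  have hright := hℓ.abs_projParam_sub_le (CAT0.lineMap x y m) y
  rw [CAT0.dist_left_lineMap x y hl] at hleft
  rw [CAT0.dist_lineMap_right x y hm] at hright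
  rw [CAT0.dist_lineMap_lineMap x y hl hm, abs_sub_comm l m, abs_of_nonneg (sub_nonneg.2 hlm)]
  linarith [neg_abs_le (projParam ℓ x - projParam ℓ (CAT0.lineMap x y l)),
    neg_abs_le (projParam ℓ (CAT0.lineMap x y m) - projParam ℓ y),
    neg_abs_le (projParam ℓ (CAT0.lineMap x y l) - projParam ℓ (CAT0.lineMap x y m))]

theorem TranslatesLine.exists_zpow_projParam_mem_Ioc {g : X ≃ᵢ X} {τ : ℝ} (hℓ : IsGeodLine ℓ)
    (hg : TranslatesLine g ℓ τ) (hτ : 0 < τ) (x : X) (a : ℝ) :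
    ∃ j : ℤ, projParam ℓ ((g ^ j) x) ∈ Ioc a (a + τ) := by
  obtain ⟨j, hj, -⟩ := existsUnique_add_zsmul_mem_Ioc hτ (projParam ℓ x) a
  exact ⟨j, by simpa [(hg.zpow j).projParam_apply hℓ] using hj⟩

/-- A thin high segment, translated so that its projection is nearly centred at `ℓ 0`. -/
theorem TranslatesLine.exists_section_of_not_hasExcess {g : X ≃ᵢ X} {τ K ε : ℝ}
    (hℓ : IsGeodLine ℓ) (hg : TranslatesLine g ℓ τ) (hτ : 0 < τ) (h : ¬ HasExcess ℓ K ε) :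
    ∃ z : ℝ → X, (∀ t, |t| ≤ K / 2 - τ → projParam ℓ (z t) = t ∧
        K - ε ≤ infDist (z t) (range ℓ)) ∧
      ∀ s t, |s| ≤ K / 2 - τ → |t| ≤ K / 2 - τ → dist (z s) (z t) ≤ |s - t| + ε := by
  unfold HasExcess at h
  push Not at h
  obtain ⟨x₀, y₀, hx₀, -, hxy₀, hdist₀⟩ := h
  obtain ⟨j, hj⟩ := hg.exists_zpow_projParam_mem_Ioc hℓ hτ x₀ (-(K / 2) - τ)
  have hgj := hg.zpow j
  obtain ⟨x, hx⟩ : ∃ x, x = (g ^ j) x₀ := ⟨_, rfl⟩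
  obtain ⟨y, hy⟩ : ∃ y, y = (g ^ j) y₀ := ⟨_, rfl⟩
  have hxy : projParam ℓ y = projParam ℓ x + K := by
    rw [hx, hy, hgj.projParam_apply hℓ, hgj.projParam_apply hℓ, hxy₀]
    ring
  have hdist : dist x y < K + ε := by rwa [hx, hy, IsometryEquiv.dist_eq]
  have hhigh : 2 * K ≤ infDist x (range ℓ) := by rwa [hx, hgj.infDist_apply]
  rw [← hx] at hj
  have hsection : ∀ t, ∃ z, |t| ≤ K / 2 - τ → MetricBtw x z y ∧ projParam ℓ z = t := by
    intro t
    by_cases ht : |t| ≤ K / 2 - τ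
    · obtain ⟨hlo, hhi⟩ := abs_le.1 ht
      obtain ⟨z, hz⟩ := hℓ.exists_metricBtw_projParam_eq (x := x) (y := y) (t := t)
        ⟨by linarith [hj.2], by linarith [hj.1]⟩
      exact ⟨z, fun _ => hz⟩
    · exact ⟨x, fun h => absurd h ht⟩
  choose z hz using hsection
  refine ⟨z, fun t ht => ⟨(hz t ht).2, ?_⟩, fun s t hs ht => ?_⟩
  · have := (hz t ht).1.dist_left_le
    linarith [le_abs_self (infDist x (range ℓ) - infDist (z t) (range ℓ)),
      abs_infDist_sub_infDist_le x (z t) (range ℓ)]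
  · have := hℓ.dist_le_of_thin (e := ε) (by linarith) (hz s hs).1 (hz t ht).1
    rwa [(hz s hs).2, (hz t ht).2] at this

theorem TranslatesLine.exists_hasExcess [ProperSpace X] {g : X ≃ᵢ X} {τ : ℝ} (hℓ : IsGeodLine ℓ)
    (hg : TranslatesLine g ℓ τ) (hτ : 0 < τ) (hflat : ¬ BoundsHalfPlane ℓ) :
    ∃ K > 0, ∃ ε > 0, HasExcess ℓ K ε := by
  by_contra! hthin
  have hsection := fun n : ℕ => hg.exists_section_of_not_hasExcess hℓ hτ
    (hthin (n + 1) n.cast_add_one_pos (1 / (n + 1)) Nat.one_div_pos_of_nat)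
  choose z hz hdist using hsection
  have hwide : ∀ t : ℝ, ∀ᶠ n : ℕ in atTop, |t| ≤ (n + 1 : ℝ) / 2 - τ := fun t => by
    filter_upwards [tendsto_natCast_atTop_atTop.eventually_ge_atTop (2 * (|t| + τ))] with n hn
    linarith
  have hε : Tendsto (fun n : ℕ => 1 / (n + 1 : ℝ)) atTop (𝓝 0) :=
    tendsto_one_div_add_atTop_nhds_zero_nat
  refine hflat (hℓ.boundsHalfPlane_of_tendsto (U := atTop) (z := z)
    (fun t => (hwide t).mono fun n hn => (hz n t hn).1) (fun t => ?_) fun s t c hc => ?_)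
  · refine tendsto_atTop_mono' _ ?_ (tendsto_natCast_atTop_atTop (R := ℝ))
    filter_upwards [hwide t, hε.eventually_le_const one_pos] with n hn hle
    linarith [(hz n t hn).2]
  · filter_upwards [hwide s, hwide t, hε.eventually_le_const (sub_pos.2 hc)] with n hs ht hle
    linarith [hdist n s t hs ht]

/-- By convexity of the distance, the excess grows linearly with the height. -/
theorem HasExcess.add_le_dist {K ε w : ℝ} {x y : X} (h : HasExcess ℓ K ε) (hℓ : IsGeodLine ℓ)
    (hK : 0 < K) (hw : 2 * K ≤ w) (hx : w ≤ infDist x (range ℓ)) (hy : w ≤ infDist y (range ℓ))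
    (hxy : projParam ℓ y = projParam ℓ x + K) : K + ε * w / (2 * K) ≤ dist x y := by
  have hw0 : 0 < w := by linarith
  have hl : 2 * K / w ∈ Icc (0 : ℝ) 1 := ⟨by positivity, (div_le_one hw0).2 hw⟩
  let q (p : X) : X := CAT0.lineMap (ℓ (projParam ℓ p)) p (2 * K / w)
  have hfoot (p : X) : IsNearestPoint (range ℓ) (q p) (ℓ (projParam ℓ p)) :=
    (hℓ.isNearestPoint_projParam p).of_metricBtw (CAT0.metricBtw_lineMap _ p hl)
  have hhigh (p : X) (hp : w ≤ infDist p (range ℓ)) : 2 * K ≤ infDist (q p) (range ℓ) := by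
    rw [← (hfoot p).dist_eq, dist_comm, CAT0.dist_left_lineMap _ p hl, hℓ.dist_projParam,
      div_mul_eq_mul_div, le_div_iff₀ hw0]
    gcongr
  have hexcess := h (q x) (q y) (hhigh x hx) (hhigh y hy)
    (by rw [hℓ.projParam_eq (hfoot x), hℓ.projParam_eq (hfoot y), hxy])
  have hconv : dist (q x) (q y) ≤ _ :=
    CAT0.dist_lineMap_lineMap_le (ℓ (projParam ℓ x)) x (ℓ (projParam ℓ y)) y hl
  rw [hℓ, hxy, sub_add_cancel_left, abs_neg, abs_of_pos hK] at hconv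
  have hscaled : ε ≤ 2 * K / w * (dist x y - K) := by linarith
  rw [div_mul_eq_mul_div, le_div_iff₀ hw0] at hscaled
  rw [← le_sub_iff_add_le', div_le_iff₀ (by positivity)]
  linarith

theorem HasExcess.mul_le_dist {K ε w : ℝ} (h : HasExcess ℓ K ε) (hℓ : IsGeodLine ℓ) (hK : 0 < K)
    (hw : 2 * K ≤ w) (m : ℕ) {x y : X} (hhigh : ∀ q, MetricBtw x q y → w ≤ infDist q (range ℓ))
    (hxy : projParam ℓ x + m * K ≤ projParam ℓ y) :
    m * (K + ε * w / (2 * K)) ≤ dist x y := by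
  induction m generalizing x with
  | zero => simp
  | succ m ih =>
    push_cast at hxy ⊢
    have hmK : 0 ≤ m * K := by positivity
    obtain ⟨z, hz, hzt⟩ := hℓ.exists_metricBtw_projParam_eq (x := x) (y := y)
      (t := projParam ℓ x + K) ⟨by linarith, by linarith⟩
    have hfirst := h.add_le_dist hℓ hK hw (hhigh x (.left x y)) (hhigh z hz) hzt
    have hrest := ih (fun q hq => hhigh q (hz.trans_right hq)) (by rw [hzt]; linarith)
    rw [← hz]
    linarith

end Excess

section Contracting

variable {X : Type*} [MetricSpace X] {ℓ : ℝ → X} {M : ℝ}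

/-- Two points at the same height `k ≥ M` above `ℓ` whose projections are at least `M` apart are
at distance at least `3 / 2 * k`; any factor greater than the Euclidean `√2` would do. -/
def PerpendicularsDiverge (ℓ : ℝ → X) (M : ℝ) : Prop :=
  ∀ x y k, M ≤ k → infDist x (range ℓ) = k → infDist y (range ℓ) = k →
    M ≤ |projParam ℓ x - projParam ℓ y| → 3 / 2 * k ≤ dist x y

/-- The line `ℓ` is contracting: a geodesic whose end points project far from `ℓ t`, on both
sides, passes near `ℓ t`. -/
def IsContracting (ℓ : ℝ → X) (M : ℝ) : Prop :=
  ∀ x y t, projParam ℓ x + M ≤ t → t + M ≤ projParam ℓ y →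
    ∃ z, MetricBtw x z y ∧ dist z (ℓ t) ≤ 20 * M

variable [CAT0 X]

/-- A segment shorter than `3 / 2 * k` between points of height `k` stays above height `k / 4`,
hence collects an excess proportional to `k` over each of the `m` blocks of length `K`. -/
theorem HasExcess.exists_perpendicularsDiverge {K ε : ℝ} (h : HasExcess ℓ K ε)
    (hℓ : IsGeodLine ℓ) (hK : 0 < K) (hε : 0 < ε) : ∃ M > 0, PerpendicularsDiverge ℓ M := by
  obtain ⟨m, hm⟩ := exists_nat_ge (12 * K / ε)
  rw [div_le_iff₀ hε] at hm
  have hmK : 0 ≤ m * K := by positivity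
  refine ⟨m * K + 8 * K, by positivity, fun x y k hk hx hy hxy => ?_⟩
  wlog hle : projParam ℓ x ≤ projParam ℓ y generalizing x y
  · rw [dist_comm]
    exact this y x hy hx (by rwa [abs_sub_comm]) (le_of_not_ge hle)
  rw [abs_of_nonpos (sub_nonpos.2 hle)] at hxy
  by_contra! hlt
  have hhigh : ∀ q, MetricBtw x q y → k / 4 ≤ infDist q (range ℓ) := by
    intro q hq
    have hxq := abs_le.1 (abs_infDist_sub_infDist_le x q (range ℓ))
    have hqy := abs_le.1 (abs_infDist_sub_infDist_le q y (range ℓ))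
    unfold MetricBtw at hq
    linarith [hxq.2, hqy.1]
  have hlong := h.mul_le_dist hℓ hK (by linarith) m hhigh (by linarith)
  have hexcess : 3 / 2 * k ≤ m * (ε * (k / 4) / (2 * K)) := by
    rw [mul_div_assoc', le_div_iff₀ (by positivity)]
    nlinarith
  linarith

/-- One of the two angles at a point of a segment is obtuse. -/
theorem MetricBtw.sq_add_sq_le_or {x z y : X} (h : MetricBtw x z y) (p : X) :
    dist p z ^ 2 + dist x z ^ 2 ≤ dist p x ^ 2 ∨ dist p z ^ 2 + dist y z ^ 2 ≤ dist p y ^ 2 := by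
  obtain ⟨l, hl, rfl⟩ := h.eq_lineMap
  have hstewart := CAT0.dist_lineMap_sq_le p x y hl
  rw [CAT0.dist_left_lineMap x y hl, dist_comm y, CAT0.dist_lineMap_right x y hl]
  by_contra! hacute
  rcases hl.1.eq_or_lt with rfl | hpos
  · linarith [hacute.1]
  · nlinarith [mul_lt_mul_of_pos_left hacute.2 hpos,
      mul_le_mul_of_nonneg_left hacute.1.le (sub_nonneg.2 hl.2)]

namespace IsGeodLine

variable {x z : X}

theorem infDist_le_infDist_of_obtuse (hℓ : IsGeodLine ℓ)
    (hobtuse : infDist z (range ℓ) ^ 2 + dist x z ^ 2 ≤ dist (ℓ (projParam ℓ z)) x ^ 2) :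
    infDist z (range ℓ) ≤ infDist x (range ℓ) := by
  have hquad := CAT0.dist_sq_add_dist_sq_le x (ℓ (projParam ℓ x)) (ℓ (projParam ℓ z)) z
  have hangle := hℓ.infDist_sq_add_sq_le z (projParam ℓ x)
  rw [dist_comm x (ℓ (projParam ℓ x)), hℓ.dist_projParam, hℓ.dist_projParam, hℓ, sq_abs,
    dist_comm _ z, dist_comm z x, dist_comm x (ℓ _)] at hquad
  rw [sub_sq_comm] at hangle
  exact abs_le_of_sq_le_sq' (by linarith) infDist_nonneg |>.2

theorem dist_perpPoint_le_of_obtuse (hℓ : IsGeodLine ℓ)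
    (hobtuse : infDist z (range ℓ) ^ 2 + dist x z ^ 2 ≤ dist (ℓ (projParam ℓ z)) x ^ 2) :
    dist z (perpPoint ℓ x (infDist z (range ℓ))) ≤
      √(infDist z (range ℓ) ^ 2 + (infDist z (range ℓ) + |projParam ℓ x - projParam ℓ z|) ^ 2) +
        |projParam ℓ x - projParam ℓ z| := by
  have hzx := hℓ.infDist_le_infDist_of_obtuse hobtuse
  have hl := div_infDist_mem_Icc ⟨infDist_nonneg, hzx⟩
  have hcancel := div_mul_cancel_of_imp (a := infDist z (range ℓ)) (b := infDist x (range ℓ))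
    fun h => (hzx.trans_eq h).antisymm infDist_nonneg
  have hc := hℓ.dist_projParam z
  have ha := hℓ.dist_projParam x
  have hac := hℓ (projParam ℓ x) (projParam ℓ z)
  unfold perpPoint
  set k := infDist z (range ℓ)
  set H := infDist x (range ℓ)
  set b := |projParam ℓ x - projParam ℓ z|
  set c := ℓ (projParam ℓ z)
  set a := ℓ (projParam ℓ x)
  set l := k / H
  have hb : 0 ≤ b := abs_nonneg _
  have hfan : dist (CAT0.lineMap c x l) (CAT0.lineMap a x l) ≤ b := by
    have := CAT0.dist_lineMap_lineMap_le c x a x hl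
    rw [dist_self, mul_zero, add_zero, dist_comm c a, hac] at this
    exact this.trans (mul_le_of_le_one_left hb (sub_le_self _ hl.1))
  have hlen : l * dist c x ≤ k + b := by
    calc l * dist c x ≤ l * (H + b) := by
          refine mul_le_mul_of_nonneg_left ?_ hl.1
          linarith [dist_triangle_left c x a]
      _ ≤ k + b := by linarith [mul_le_of_le_one_left hb hl.2]
  have hstewart := CAT0.dist_lineMap_sq_le z c x hl
  rw [dist_comm z c, hc, dist_comm z x] at hstewart
  have hnear : dist z (CAT0.lineMap c x l) ≤ √(k ^ 2 + (k + b) ^ 2) := by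
    refine Real.le_sqrt_of_sq_le ?_
    have hprod := mul_le_mul_of_nonneg_left hobtuse hl.1
    have hsq := pow_le_pow_left₀ (mul_nonneg hl.1 dist_nonneg) hlen 2
    linarith [mul_nonneg hl.1 (sq_nonneg k)]
  exact (dist_triangle _ _ _).trans (add_le_add hnear hfan)

end IsGeodLine

theorem PerpendicularsDiverge.infDist_le_of_obtuse (h : PerpendicularsDiverge ℓ M)
    (hℓ : IsGeodLine ℓ) (hM : 0 < M) {x z : X} (hxz : |projParam ℓ x - projParam ℓ z| = M)
    (hobtuse : infDist z (range ℓ) ^ 2 + dist x z ^ 2 ≤ dist (ℓ (projParam ℓ z)) x ^ 2) :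
    infDist z (range ℓ) ≤ 20 * M := by
  by_contra! hlt
  have hk : infDist z (range ℓ) ∈ Icc 0 (infDist x (range ℓ)) :=
    ⟨infDist_nonneg, hℓ.infDist_le_infDist_of_obtuse hobtuse⟩
  have hfar := h z (perpPoint ℓ x (infDist z (range ℓ))) _ (by linarith) rfl
    (hℓ.infDist_perpPoint hk) (by rw [hℓ.projParam_perpPoint hk, abs_sub_comm, hxz])
  have hnear := hℓ.dist_perpPoint_le_of_obtuse hobtuse
  rw [hxz] at hnear
  have hsqrt : 3 / 2 * infDist z (range ℓ) - M ≤
      √(infDist z (range ℓ) ^ 2 + (infDist z (range ℓ) + M) ^ 2) := by linarith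
  rw [Real.le_sqrt' (by linarith)] at hsqrt
  nlinarith

theorem PerpendicularsDiverge.isContracting (h : PerpendicularsDiverge ℓ M) (hℓ : IsGeodLine ℓ)
    (hM : 0 < M) : IsContracting ℓ M := by
  intro x y t hx hy
  obtain ⟨z, hz, hzt⟩ := hℓ.exists_metricBtw_projParam_eq (x := x) (y := y) (t := t)
    ⟨by linarith, by linarith⟩
  obtain ⟨y', hy', hyt⟩ := hℓ.exists_metricBtw_projParam_eq (x := z) (y := y) (t := t + M)
    ⟨by linarith, by linarith⟩
  obtain ⟨x', hx', hxt⟩ := hℓ.exists_metricBtw_projParam_eq (x := x) (y := z) (t := t - M)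
    ⟨by linarith, by linarith⟩
  have hx'zy' : MetricBtw x' z y' :=
    ((hz.middle_of_right hy').symm.middle_of_right hx'.symm).symm
  have hobtuse := hx'zy'.sq_add_sq_le_or (ℓ (projParam ℓ z))
  rw [hℓ.dist_projParam] at hobtuse
  refine ⟨z, hz, ?_⟩
  rw [dist_comm, ← hzt, hℓ.dist_projParam]
  rcases hobtuse with hobtuse | hobtuse
  · refine h.infDist_le_of_obtuse hℓ hM ?_ hobtuse
    rw [hxt, hzt, sub_sub_cancel_left, abs_neg, abs_of_pos hM]
  · refine h.infDist_le_of_obtuse hℓ hM ?_ hobtuse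
    rw [hyt, hzt, add_sub_cancel_left, abs_of_pos hM]

theorem TranslatesLine.exists_isContracting [ProperSpace X] {g : X ≃ᵢ X} {τ : ℝ}
    (hℓ : IsGeodLine ℓ) (hg : TranslatesLine g ℓ τ) (hτ : 0 < τ) (hflat : ¬ BoundsHalfPlane ℓ) :
    ∃ M > 0, IsContracting ℓ M := by
  obtain ⟨K, hK, ε, hε, hexcess⟩ := hg.exists_hasExcess hℓ hτ hflat
  obtain ⟨M, hM, hdiverge⟩ := hexcess.exists_perpendicularsDiverge hℓ hK hε
  exact ⟨M, hM, hdiverge.isContracting hℓ hM⟩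

end Contracting

section Cosets

theorem mem_of_eventually_iterate_mem {α : Type*} {f : α → α} (hf : f.Injective) {A : Set α}
    (hA : A.Finite) {x : α} (h : ∀ᶠ n in atTop, f^[n] x ∈ A) : x ∈ A := by
  obtain ⟨N, hN⟩ := eventually_atTop.1 h
  obtain ⟨k, l, hkl, heq⟩ := hA.exists_lt_map_eq_of_forall_mem (f := fun k => f^[N + k] x)
    fun k => hN _ (N.le_add_right k)
  have hperiodic : f.IsPeriodicPt (N + l - (N + k)) x := Function.iterate_cancel hf heq.symm
  rw [← (hperiodic.mul_const N).eq]
  exact hN _ (Nat.le_mul_of_pos_left N (by omega))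

variable {G : Type*} [Group G] {Γ Γ₀ : Subgroup G}

theorem exists_mk_notMem_of_index_eq_zero (h : (Γ₀.subgroupOf Γ).index = 0) {A : Set (G ⧸ Γ₀)}
    (hA : A.Finite) : ∃ g ∈ Γ, (g : G ⧸ Γ₀) ∉ A := by
  by_contra! hall
  have : Finite A := hA
  have : Finite (Γ ⧸ Γ₀.subgroupOf Γ) := by
    refine Finite.of_injective (fun q => (⟨_, hall q.out q.out.2⟩ : A)) fun q q' hq => ?_
    rw [← q.out_eq', ← q'.out_eq', QuotientGroup.eq, Subgroup.mem_subgroupOf]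
    simpa only [Subtype.mk.injEq, QuotientGroup.eq, Subgroup.coe_mul, Subgroup.coe_inv] using hq
  exact Subgroup.index_ne_zero_of_finite h

theorem exists_finite_mul_inv_mem_of_index_ne_zero (h : (Γ₀.subgroupOf Γ).index ≠ 0) :
    ∃ F : Set G, F.Finite ∧ ∀ g ∈ Γ, ∃ φ ∈ F, g * φ⁻¹ ∈ Γ₀ := by
  obtain ⟨S, hS, -⟩ := (Γ₀.subgroupOf Γ).exists_isComplement_right 1
  have hfinite : S.Finite := hS.finite_right_iff.2 ⟨h⟩
  refine ⟨Subtype.val '' S, hfinite.image _, fun g hg => ?_⟩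
  obtain ⟨⟨γ, φ⟩, hγφ, -⟩ := hS.existsUnique ⟨g, hg⟩
  refine ⟨φ, mem_image_of_mem _ φ.2, ?_⟩
  rw [show g = γ * φ from congrArg Subtype.val hγφ.symm, mul_inv_cancel_right]
  exact γ.2

end Cosets

section PingPong

variable {X : Type*} [MetricSpace X] {Γ Γ₀ : Subgroup (X ≃ᵢ X)} {C : Set X} {ℓ : ℝ → X} {o' : X}
  {D M : ℝ}

/-- `Γ₀` preserves the convex set `C ∋ o'`, and its translates of the closed ball of radius `D`
about `o'` cover `C`. -/
structure ConvexCocompactOn (Γ₀ : Subgroup (X ≃ᵢ X)) (C : Set X) (o' : X) (D : ℝ) : Prop where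
  convex : GeodConvex C
  image_eq : ∀ g ∈ Γ₀, g '' C = C
  mem : o' ∈ C
  exists_dist_le : ∀ x ∈ C, ∃ g ∈ Γ₀, dist x (g o') ≤ D

theorem ConvexCocompactOn.apply_mem (h : ConvexCocompactOn Γ₀ C o' D) {γ : X ≃ᵢ X} (hγ : γ ∈ Γ₀) :
    γ o' ∈ C :=
  h.image_eq γ hγ ▸ mem_image_of_mem γ h.mem

theorem IsDiscreteSubgroup.finite_setOf_dist_le (h : IsDiscreteSubgroup Γ) (x y : X) (r : ℝ) :
    {g | g ∈ Γ ∧ dist (g x) y ≤ r}.Finite := by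
  refine ((h x (r + dist x y)).image Subtype.val).subset fun g hg => ⟨⟨g, hg.1⟩, ?_, rfl⟩
  exact (dist_triangle_right _ _ _).trans (add_le_add_left hg.2 _)

theorem ConvexCocompactOn.mk_mem_image (h : ConvexCocompactOn Γ₀ C o' D) (hle : Γ₀ ≤ Γ)
    {g : X ≃ᵢ X} (hg : g ∈ Γ) {c p : X} {r : ℝ} (hc : c ∈ C) (hcp : dist (g c) p ≤ r) :
    (g : (X ≃ᵢ X) ⧸ Γ₀) ∈ QuotientGroup.mk '' {g | g ∈ Γ ∧ dist (g o') p ≤ D + r} := by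
  obtain ⟨γ, hγ, hcγ⟩ := h.exists_dist_le c hc
  refine ⟨g * γ, ⟨Γ.mul_mem hg (hle hγ), ?_⟩, QuotientGroup.mk_mul_of_mem g hγ⟩
  rw [← g.dist_eq, dist_comm] at hcγ
  exact (dist_triangle _ (g c) _).trans (add_le_add hcγ hcp)

theorem GeodConvex.image (hC : GeodConvex C) (g : X ≃ᵢ X) : GeodConvex (g '' C) := by
  intro γ a b hab hγ ha hb t ht
  rw [← g.preimage_symm] at *
  exact hC (g.symm ∘ γ) a b hab
    (fun u hu v hv => (g.symm.dist_eq _ _).trans (hγ u hu v hv)) ha hb t ht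

theorem IsContracting.eventually_atTop_exists_dist_le [CAT0 X] (h : IsContracting ℓ M)
    (hC : GeodConvex C) (hunb : ∀ T, ∃ x ∈ C, T < projParam ℓ x) :
    ∀ᶠ t in atTop, ∃ c ∈ C, dist c (ℓ t) ≤ 20 * M := by
  obtain ⟨x, hx, -⟩ := hunb 0
  filter_upwards [eventually_ge_atTop (projParam ℓ x + M)] with t ht
  obtain ⟨y, hy, hty⟩ := hunb (t + M)
  obtain ⟨z, hz, hzt⟩ := h x y t ht hty.le
  exact ⟨z, hC.mem_of_metricBtw hx hy hz, hzt⟩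

theorem IsContracting.eventually_atBot_exists_dist_le [CAT0 X] (h : IsContracting ℓ M)
    (hC : GeodConvex C) (hunb : ∀ T, ∃ x ∈ C, projParam ℓ x < T) :
    ∀ᶠ t in atBot, ∃ c ∈ C, dist c (ℓ t) ≤ 20 * M := by
  obtain ⟨y, hy, -⟩ := hunb 0
  filter_upwards [eventually_le_atBot (projParam ℓ y - M)] with t ht
  obtain ⟨x, hx, hxt⟩ := hunb (t - M)
  obtain ⟨z, hz, hzt⟩ := h x y t (by linarith) (by linarith)
  exact ⟨z, hC.mem_of_metricBtw hx hy hz, hzt⟩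

/-- If `g C` projects to an unbounded subset of `ℓ`, then it passes near `ℓ (n τ)`, so that
`h⁻ⁿ g Γ₀` lies in a fixed finite set of cosets, for all large `n` or all large `-n`. -/
theorem ConvexCocompactOn.exists_abs_projParam_le [CAT0 X] (h₀ : ConvexCocompactOn Γ₀ C o' D)
    (hle : Γ₀ ≤ Γ) (hdisc : IsDiscreteSubgroup Γ) (hindex : (Γ₀.subgroupOf Γ).index = 0)
    (hM : IsContracting ℓ M) {h : X ≃ᵢ X} (hh : h ∈ Γ) {τ : ℝ} (hτ : 0 < τ)
    (hℓ : TranslatesLine h ℓ τ) : ∃ g ∈ Γ, ∃ T, ∀ x ∈ g '' C, |projParam ℓ x| ≤ T := by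
  let A : Set ((X ≃ᵢ X) ⧸ Γ₀) :=
    QuotientGroup.mk '' {g | g ∈ Γ ∧ dist (g o') (ℓ 0) ≤ D + 20 * M}
  have hA : A.Finite := (hdisc.finite_setOf_dist_le o' (ℓ 0) _).image _
  obtain ⟨g, hg, hgA⟩ := exists_mk_notMem_of_index_eq_zero hindex hA
  have hgC : GeodConvex (g '' C) := h₀.convex.image g
  have hnear : ∀ k ∈ Subgroup.zpowers h, ∀ t, (k (ℓ t) = ℓ 0) →
      (∃ c ∈ g '' C, dist c (ℓ t) ≤ 20 * M) → (k • g : (X ≃ᵢ X) ⧸ Γ₀) ∈ A := by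
    rintro k hk t hkt ⟨_, ⟨c, hc, rfl⟩, hct⟩
    rw [← k.dist_eq, hkt] at hct
    exact h₀.mk_mem_image hle (Γ.mul_mem (Subgroup.zpowers_le.2 hh hk) hg) hc hct
  have hmul : Tendsto (fun n : ℕ => n * τ) atTop atTop :=
    tendsto_natCast_atTop_atTop.atTop_mul_const hτ
  have hup : ∃ T, ∀ x ∈ g '' C, projParam ℓ x ≤ T := by
    by_contra! hunb
    refine hgA (mem_of_eventually_iterate_mem (MulAction.injective h⁻¹) hA ?_)
    filter_upwards [hmul.eventually (hM.eventually_atTop_exists_dist_le hgC hunb)] with n hn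
    rw [smul_iterate]
    exact hnear _ (Subgroup.pow_mem _ (Subgroup.inv_mem _ (Subgroup.mem_zpowers h)) n) _
      (by rw [hℓ.inv.pow n]; simp) hn
  have hdown : ∃ T, ∀ x ∈ g '' C, T ≤ projParam ℓ x := by
    by_contra! hunb
    refine hgA (mem_of_eventually_iterate_mem (MulAction.injective h) hA ?_)
    filter_upwards [(tendsto_neg_atTop_atBot.comp hmul).eventually
      (hM.eventually_atBot_exists_dist_le hgC hunb)] with n hn
    rw [smul_iterate]
    exact hnear _ (Subgroup.pow_mem _ (Subgroup.mem_zpowers h) n) _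
      (by rw [hℓ.pow n]; simp) hn
  obtain ⟨T, hT⟩ := hup
  obtain ⟨S, hS⟩ := hdown
  exact ⟨g, hg, max T (-S), fun x hx => abs_le.2
    ⟨by linarith [hS x hx, le_max_right T (-S)], (hT x hx).trans (le_max_left _ _)⟩⟩

/-- Nearest point ping-pong: `f` maps the points whose nearest point of `C` is at distance more
than `r` from `o'` to points whose nearest point of `C` is at distance at most `r` from `o'`. -/
def IsPingPong (f : X ≃ᵢ X) (C : Set X) (o' : X) (r : ℝ) : Prop :=
  ∀ x c c', IsNearestPoint C x c → r < dist c o' → IsNearestPoint C (f x) c' → dist c' o' ≤ r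

theorem IsPingPong.conj {f g : X ≃ᵢ X} {r : ℝ} (h : IsPingPong f (g '' C) (g o') r) :
    IsPingPong (g⁻¹ * f * g) C o' r := by
  intro x c c' hc hcr hc'
  have hgc' := hc'.map g
  rw [mul_assoc, IsometryEquiv.mul_apply, IsometryEquiv.mul_apply,
    IsometryEquiv.apply_inv_self] at hgc'
  rw [← g.dist_eq] at hcr ⊢
  exact h _ _ _ (hc.map g) hcr hgc'

/-- The segment from `c` to `y` passes near `ℓ` at a parameter next to `[-T, T]`, and no point of
`C` is much closer to `y` than `c`. -/
theorem IsContracting.dist_le_of_lt_abs_projParam (hM : IsContracting ℓ M) (hM0 : 0 ≤ M)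
    (hℓ : IsGeodLine ℓ) {T : ℝ} (hT : ∀ x ∈ C, |projParam ℓ x| ≤ T) (ho' : o' ∈ C) {y c : X}
    (hc : IsNearestPoint C y c) (hy : T + 2 * M < |projParam ℓ y|) :
    dist c o' ≤ 2 * (20 * M + (T + M) + dist (ℓ 0) o') := by
  have hcT := abs_le.1 (hT c hc.mem)
  obtain ⟨t, z, ht, hz, hzt⟩ :
      ∃ t z, |t| ≤ T + M ∧ MetricBtw c z y ∧ dist z (ℓ t) ≤ 20 * M := by
    rcases lt_abs.1 hy with hy | hy
    · obtain ⟨z, hz, hzt⟩ := hM c y (projParam ℓ c + M) le_rfl (by linarith)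
      exact ⟨_, z, abs_le.2 ⟨by linarith, by linarith⟩, hz, hzt⟩
    · obtain ⟨z, hz, hzt⟩ := hM y c (projParam ℓ c - M) (by linarith) (by linarith)
      exact ⟨_, z, abs_le.2 ⟨by linarith, by linarith⟩, hz.symm, hzt⟩
  have hzo' : dist z o' ≤ 20 * M + (T + M) + dist (ℓ 0) o' := by
    have htri := dist_triangle4 z (ℓ t) (ℓ 0) o'
    rw [hℓ, sub_zero] at htri
    linarith
  have hcz : dist c z ≤ dist z o' := by
    have hle := hc.dist_le ho'
    rw [MetricBtw, dist_comm z, dist_comm c y] at hz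
    linarith [dist_triangle y z o']
  linarith [dist_triangle c z o']

theorem TranslatesLine.exists_pow_isPingPong [CAT0 X] {h : X ≃ᵢ X} {τ : ℝ} (hℓ : IsGeodLine ℓ)
    (hh : TranslatesLine h ℓ τ) (hτ : 0 < τ) (hM : IsContracting ℓ M) (hM0 : 0 ≤ M)
    (ho' : o' ∈ C) {T : ℝ} (hT : ∀ x ∈ C, |projParam ℓ x| ≤ T) :
    ∃ n : ℕ, ∃ r ≥ 0, IsPingPong (h ^ n) C o' r := by
  have hT0 : 0 ≤ T := (abs_nonneg _).trans (hT o' ho')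
  obtain ⟨n, hn⟩ := exists_nat_gt (2 * (T + 2 * M) / τ)
  rw [div_lt_iff₀ hτ] at hn
  refine ⟨n, 2 * (20 * M + (T + M) + dist (ℓ 0) o'), by positivity, fun x c c' hc hcr hc' =>
    hM.dist_le_of_lt_abs_projParam hM0 hℓ hT ho' hc' ?_⟩
  have hx : |projParam ℓ x| ≤ T + 2 * M :=
    not_lt.1 fun hx => hcr.not_ge (hM.dist_le_of_lt_abs_projParam hM0 hℓ hT ho' hc hx)
  rw [(hh.pow n).projParam_apply hℓ]
  exact lt_abs.2 (Or.inl (by linarith [(abs_le.1 hx).1]))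

theorem ConvexCocompactOn.exists_isPingPong [CAT0 X] [ProperSpace X]
    (h₀ : ConvexCocompactOn Γ₀ C o' D) (hle : Γ₀ ≤ Γ) (hdisc : IsDiscreteSubgroup Γ)
    (hrk : RankOne Γ) (hindex : (Γ₀.subgroupOf Γ).index = 0) :
    ∃ f ∈ Γ, ∃ r ≥ 0, IsPingPong f C o' r := by
  obtain ⟨h, hh, ℓ, hℓ, hflat, τ, hτ, htrans⟩ := hrk
  obtain ⟨M, hM0, hM⟩ := TranslatesLine.exists_isContracting hℓ htrans hτ hflat
  obtain ⟨g, hg, T, hT⟩ := h₀.exists_abs_projParam_le hle hdisc hindex hM hh hτ htrans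
  obtain ⟨n, r, hr0, hr⟩ := TranslatesLine.exists_pow_isPingPong hℓ htrans hτ hM hM0.le
    (mem_image_of_mem g h₀.mem) hT
  exact ⟨g⁻¹ * h ^ n * g, Γ.mul_mem (Γ.mul_mem (Γ.inv_mem hg) (Γ.pow_mem hh n)) hg,
    r, hr0, hr.conj⟩

end PingPong

theorem tendsto_natCeil_div {u : ℕ → ℝ} {L : ℝ} (hu : Tendsto (fun n => u n / n) atTop (𝓝 L)) :
    Tendsto (fun R : ℝ => u ⌈R⌉₊ / R) atTop (𝓝 L) := by
  have hceil := (hu.comp tendsto_nat_ceil_atTop).mul (tendsto_nat_ceil_div_atTop (R := ℝ))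
  rw [mul_one] at hceil
  refine hceil.congr' ?_
  filter_upwards [eventually_gt_atTop 0] with R hR
  exact div_mul_div_cancel₀ (Nat.cast_ne_zero.2 (Nat.ceil_pos.2 hR).ne')

section OrbitCount

variable {X : Type*} [MetricSpace X] {Γ Γ₀ : Subgroup (X ≃ᵢ X)} {o : X}

theorem dist_mul_apply_le (g h : X ≃ᵢ X) (o : X) :
    dist ((g * h) o) o ≤ dist (g o) o + dist (h o) o := by
  rw [IsometryEquiv.mul_apply, add_comm, ← g.dist_eq (h o)]
  exact dist_triangle _ _ _

theorem dist_inv_apply (g : X ≃ᵢ X) (x y : X) : dist (g⁻¹ x) y = dist x (g y) := by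
  rw [← g.dist_eq, IsometryEquiv.apply_inv_self]

theorem dist_apply_le_add (g : X ≃ᵢ X) (x y : X) :
    dist (g x) x ≤ dist (g y) y + 2 * dist x y := by
  have htri := dist_triangle4 (g x) (g y) y x
  rw [g.dist_eq, dist_comm y x] at htri
  linarith

theorem orbitCount_eq_ncard (Γ : Subgroup (X ≃ᵢ X)) (o : X) (R : ℝ) :
    orbitCount Γ o R = {g | g ∈ Γ ∧ dist (g o) o ≤ R}.ncard := by
  have himage : {g | g ∈ Γ ∧ dist (g o) o ≤ R} =
      Subtype.val '' {g : Γ | dist ((g : X ≃ᵢ X) o) o ≤ R} := by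
    ext g
    simp [and_comm]
  rw [himage, ncard_image_of_injective _ Subtype.val_injective]
  rfl

open scoped Pointwise in
theorem orbitCount_le_ncard_mul_ncard {A B : Set (X ≃ᵢ X)} {R : ℝ} (hA : A.Finite)
    (hB : B.Finite) (h : ∀ g ∈ Γ, dist (g o) o ≤ R → ∃ a ∈ A, ∃ b ∈ B, a * b = g) :
    orbitCount Γ o R ≤ A.ncard * B.ncard := by
  rw [orbitCount_eq_ncard]
  exact (ncard_le_ncard (fun g hg => mem_mul.2 (h g hg.1 hg.2)) (hA.mul hB)).trans
    natCard_mul_le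

theorem log_orbitCount_div_nonneg (Γ : Subgroup (X ≃ᵢ X)) (o : X) {R : ℝ} (hR : 0 ≤ R) :
    0 ≤ Real.log (orbitCount Γ o R) / R :=
  div_nonneg (Real.log_natCast_nonneg _) hR

theorem isCoboundedUnder_log_orbitCount_div (Γ : Subgroup (X ≃ᵢ X)) (o : X) :
    IsCoboundedUnder (· ≤ ·) atTop fun R : ℝ => Real.log (orbitCount Γ o R) / R :=
  (isBoundedUnder_of_eventually_ge <| (eventually_ge_atTop 0).mono fun _ =>
    log_orbitCount_div_nonneg Γ o).isCoboundedUnder_le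

namespace HasFiniteCritExp

theorem isBoundedUnder (h : HasFiniteCritExp Γ o) :
    IsBoundedUnder (· ≤ ·) atTop fun R : ℝ => Real.log (orbitCount Γ o R) / R :=
  let ⟨_, ha⟩ := h
  isBoundedUnder_of_eventually_le ((eventually_ge_atTop 1).mono ha)

theorem critExp_nonneg (h : HasFiniteCritExp Γ o) : 0 ≤ critExp Γ o :=
  le_limsup_of_frequently_le ((eventually_ge_atTop 0).mono fun _ =>
    log_orbitCount_div_nonneg Γ o).frequently h.isBoundedUnder

end HasFiniteCritExp

namespace IsDiscreteSubgroup

theorem mono (h : IsDiscreteSubgroup Γ) (hle : Γ₀ ≤ Γ) : IsDiscreteSubgroup Γ₀ := fun x R =>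
  ((h.finite_setOf_dist_le x x R).preimage Subtype.val_injective.injOn).subset
    fun g hg => ⟨hle g.2, hg⟩

theorem orbitCount_le_of_le (h : IsDiscreteSubgroup Γ) {R S : ℝ} (hRS : R ≤ S) :
    orbitCount Γ o R ≤ orbitCount Γ o S := by
  rw [orbitCount_eq_ncard, orbitCount_eq_ncard]
  exact ncard_le_ncard (fun g hg => ⟨hg.1, hg.2.trans hRS⟩) (h.finite_setOf_dist_le o o S)

theorem orbitCount_le_of_subgroup_le (h : IsDiscreteSubgroup Γ) (hle : Γ₀ ≤ Γ) (R : ℝ) :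
    orbitCount Γ₀ o R ≤ orbitCount Γ o R := by
  rw [orbitCount_eq_ncard, orbitCount_eq_ncard]
  exact ncard_le_ncard (fun g hg => ⟨hle hg.1, hg.2⟩) (h.finite_setOf_dist_le o o R)

theorem orbitCount_pos (h : IsDiscreteSubgroup Γ) {R : ℝ} (hR : 0 ≤ R) :
    0 < orbitCount Γ o R := by
  rw [orbitCount_eq_ncard, ncard_pos (h.finite_setOf_dist_le o o R)]
  exact ⟨1, Γ.one_mem, by simpa using hR⟩

theorem hasFiniteCritExp_of_le (h : IsDiscreteSubgroup Γ) (hfin : HasFiniteCritExp Γ o)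
    (hle : Γ₀ ≤ Γ) : HasFiniteCritExp Γ₀ o := by
  obtain ⟨a, ha⟩ := hfin
  refine ⟨a, fun R hR => le_trans ?_ (ha R hR)⟩
  have hpos := (h.mono hle).orbitCount_pos (o := o) (zero_le_one.trans hR)
  gcongr
  exact h.orbitCount_le_of_subgroup_le hle R

theorem exists_orbitCount_le_exp (h : IsDiscreteSubgroup Γ) (hfin : HasFiniteCritExp Γ o) {s : ℝ}
    (hs : critExp Γ o < s) : ∃ Q : ℝ, ∀ R ≥ 0, orbitCount Γ o R ≤ Q * Real.exp (s * R) := by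
  have hs0 : 0 ≤ s := hfin.critExp_nonneg.trans hs.le
  obtain ⟨R₀, hR₀⟩ := eventually_atTop.1
    ((eventually_lt_of_limsup_lt hs hfin.isBoundedUnder).and (eventually_gt_atTop 0))
  have hcount : (1 : ℝ) ≤ orbitCount Γ o R₀ := by
    exact_mod_cast h.orbitCount_pos (hR₀ R₀ le_rfl).2.le
  refine ⟨orbitCount Γ o R₀, fun R hR => ?_⟩
  rcases le_total R R₀ with hle | hle
  · calc (orbitCount Γ o R : ℝ) ≤ orbitCount Γ o R₀ := mod_cast h.orbitCount_le_of_le hle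
      _ ≤ orbitCount Γ o R₀ * Real.exp (s * R) :=
        le_mul_of_one_le_right (by positivity) (Real.one_le_exp (by positivity))
  · obtain ⟨hlog, hRpos⟩ := hR₀ R hle
    rw [div_lt_iff₀ hRpos, Real.log_lt_iff_lt_exp (mod_cast h.orbitCount_pos hR)] at hlog
    exact hlog.le.trans (le_mul_of_one_le_left (by positivity) hcount)

theorem critExp_le_of_orbitCount_le (h : IsDiscreteSubgroup Γ) {s Q : ℝ}
    (hQ : ∀ R ≥ 0, orbitCount Γ o R ≤ Q * Real.exp (s * R)) : critExp Γ o ≤ s := by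
  have hcount : ∀ R ≥ 0, (0 : ℝ) < orbitCount Γ o R := fun R hR => mod_cast h.orbitCount_pos hR
  have hQ0 : 0 < Q := by simpa using (hcount 0 le_rfl).trans_le (hQ 0 le_rfl)
  have hlim : Tendsto (fun R : ℝ => Real.log Q / R + s) atTop (𝓝 s) := by
    simpa using (tendsto_id.const_div_atTop (Real.log Q)).add_const s
  rw [← hlim.limsup_eq]
  refine limsup_le_limsup ?_ (isCoboundedUnder_log_orbitCount_div Γ o) hlim.isBoundedUnder_le
  filter_upwards [eventually_gt_atTop 0] with R hR
  have hlog := Real.log_le_log (hcount R hR.le) (hQ R hR.le)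
  rw [Real.log_mul hQ0.ne' (Real.exp_pos _).ne', Real.log_exp] at hlog
  rwa [div_le_iff₀ hR, add_mul, div_mul_cancel₀ _ hR.ne']

theorem critExp_nonpos [Finite Γ] (h : IsDiscreteSubgroup Γ) : critExp Γ o ≤ 0 :=
  h.critExp_le_of_orbitCount_le (Q := Nat.card Γ) fun R _ => by
    rw [zero_mul, Real.exp_zero, mul_one, Nat.cast_le]
    exact Finite.card_subtype_le _

theorem critExp_le_of_index_ne_zero (h : IsDiscreteSubgroup Γ) (hfin : HasFiniteCritExp Γ o)
    (hle : Γ₀ ≤ Γ) (hindex : (Γ₀.subgroupOf Γ).index ≠ 0) : critExp Γ o ≤ critExp Γ₀ o := by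
  obtain ⟨F, hF, hcover⟩ := exists_finite_mul_inv_mem_of_index_ne_zero hindex
  obtain ⟨D, hD⟩ := (hF.image fun φ : X ≃ᵢ X => dist (φ⁻¹ o) o).bddAbove
  refine le_of_forall_gt_imp_ge_of_dense fun s hs => ?_
  obtain ⟨Q, hQ⟩ := (h.mono hle).exists_orbitCount_le_exp (h.hasFiniteCritExp_of_le hfin hle) hs
  refine h.critExp_le_of_orbitCount_le (Q := Q * Real.exp (s * |D|) * F.ncard) fun R hR => ?_
  have hcount : orbitCount Γ o R ≤ orbitCount Γ₀ o (R + |D|) * F.ncard := by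
    rw [orbitCount_eq_ncard Γ₀]
    refine orbitCount_le_ncard_mul_ncard ((h.mono hle).finite_setOf_dist_le o o _) hF
      fun g hg hgR => ?_
    obtain ⟨φ, hφ, hgφ⟩ := hcover g hg
    refine ⟨g * φ⁻¹, ⟨hgφ, (dist_mul_apply_le _ _ _).trans ?_⟩, φ, hφ, inv_mul_cancel_right g φ⟩
    exact add_le_add hgR ((hD (mem_image_of_mem _ hφ)).trans (le_abs_self D))
  calc (orbitCount Γ o R : ℝ) ≤ orbitCount Γ₀ o (R + |D|) * F.ncard := by exact_mod_cast hcount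
    _ ≤ Q * Real.exp (s * (R + |D|)) * F.ncard := by
      gcongr
      exact hQ _ (by positivity)
    _ = Q * Real.exp (s * |D|) * F.ncard * Real.exp (s * R) := by
      rw [mul_add, Real.exp_add]
      ring

/-- Fekete's lemma turns almost submultiplicativity into an exponential lower bound. -/
theorem exp_le_orbitCount (h : IsDiscreteSubgroup Γ) {κ : ℝ} (hκ : 0 ≤ κ)
    (hmul : ∀ R ≥ 0, ∀ S ≥ 0,
      orbitCount Γ o (R + S) ≤ orbitCount Γ o (R + κ) * orbitCount Γ o (S + κ))
    {n : ℕ} (hn : n ≠ 0) :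
    Real.exp (critExp Γ o * n) ≤ orbitCount Γ o (n + 2 * κ) := by
  have hpos : ∀ R ≥ 0, (0 : ℝ) < orbitCount Γ o R := fun R hR => mod_cast h.orbitCount_pos hR
  let u (n : ℕ) : ℝ := Real.log (orbitCount Γ o (n + 2 * κ))
  have hu : Subadditive u := fun m n => by
    rw [← Real.log_mul (hpos _ (by positivity)).ne' (hpos _ (by positivity)).ne']
    refine Real.log_le_log (hpos _ (by positivity)) ?_
    have hmn := hmul (m + κ) (by positivity) (n + κ) (by positivity)
    rw [show m + κ + (n + κ) = (m + n : ℕ) + 2 * κ by push_cast; ring, add_assoc (m : ℝ),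
      add_assoc (n : ℝ), ← two_mul] at hmn
    exact_mod_cast hmn
  have hbdd : BddBelow (range fun n => u n / n) := ⟨0, by
    rintro _ ⟨n, rfl⟩
    exact div_nonneg (Real.log_natCast_nonneg _) n.cast_nonneg⟩
  have hlim : Tendsto (fun R : ℝ => u ⌈R⌉₊ / R) atTop (𝓝 hu.lim) :=
    tendsto_natCeil_div (hu.tendsto_lim hbdd)
  have hle : critExp Γ o ≤ hu.lim := by
    rw [← hlim.limsup_eq]
    refine limsup_le_limsup ?_ (isCoboundedUnder_log_orbitCount_div Γ o) hlim.isBoundedUnder_le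
    filter_upwards [eventually_gt_atTop 0] with R hR
    have hcount := hpos R hR.le
    gcongr
    exact Real.log_le_log hcount
      (mod_cast h.orbitCount_le_of_le (by linarith [Nat.le_ceil R]))
  have hn' : (0 : ℝ) < n := by positivity
  rw [← Real.le_log_iff_exp_le (hpos _ (by positivity)), ← le_div_iff₀ hn']
  exact hle.trans (hu.lim_le_div hbdd hn)

end IsDiscreteSubgroup

end OrbitCount

section ConvexCocompact

variable {X : Type*} [MetricSpace X] [CAT0 X] {Γ₀ : Subgroup (X ≃ᵢ X)} {C : Set X} {o o' : X}
  {D : ℝ}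

theorem CAT0.exists_metricBtw_dist_le (x y : X) {R S : ℝ} (hR : 0 ≤ R) (hS : 0 ≤ S)
    (h : dist x y ≤ R + S) : ∃ z, MetricBtw x z y ∧ dist x z ≤ R ∧ dist z y ≤ S := by
  rcases (dist_nonneg (x := x) (y := y)).eq_or_lt with hxy | hxy
  · exact ⟨x, .left x y, by simpa, by rwa [← hxy]⟩
  have hl : min (R / dist x y) 1 ∈ Icc (0 : ℝ) 1 := ⟨by positivity, min_le_right _ _⟩
  refine ⟨CAT0.lineMap x y _, CAT0.metricBtw_lineMap x y hl, ?_, ?_⟩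
  · rw [CAT0.dist_left_lineMap x y hl, ← le_div_iff₀ hxy]
    exact min_le_left _ _
  · rw [CAT0.dist_lineMap_right x y hl, ← le_div_iff₀ hxy, sub_le_comm, le_min_iff,
      sub_le_iff_le_add, ← add_div, one_le_div hxy]
    exact ⟨h.trans_eq (add_comm _ _) |>.trans (by linarith), by linarith [div_nonneg hS hxy.le]⟩

namespace ConvexCocompactOn

theorem exists_mul_eq (h : ConvexCocompactOn Γ₀ C o' D) {γ : X ≃ᵢ X} (hγ : γ ∈ Γ₀) {R S : ℝ}
    (hR : 0 ≤ R) (hS : 0 ≤ S) (hRS : dist (γ o') o' ≤ R + S) :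
    ∃ α ∈ Γ₀, ∃ β ∈ Γ₀, α * β = γ ∧ dist (α o') o' ≤ R + D ∧ dist (β o') o' ≤ S + D := by
  rw [dist_comm] at hRS
  obtain ⟨z, hz, hzR, hzS⟩ := CAT0.exists_metricBtw_dist_le o' (γ o') hR hS hRS
  obtain ⟨α, hα, hzα⟩ := h.exists_dist_le z (h.convex.mem_of_metricBtw h.mem (h.apply_mem hγ) hz)
  refine ⟨α, hα, α⁻¹ * γ, Γ₀.mul_mem (Γ₀.inv_mem hα) hγ, mul_inv_cancel_left α γ, ?_, ?_⟩
  · linarith [dist_triangle_left (α o') o' z, dist_comm z o']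
  · rw [IsometryEquiv.mul_apply, dist_inv_apply]
    linarith [dist_triangle_left (γ o') (α o') z]

theorem exists_orbitCount_add_le (h : ConvexCocompactOn Γ₀ C o' D) (hdisc : IsDiscreteSubgroup Γ₀)
    (o : X) : ∃ κ ≥ 0, ∀ R ≥ 0, ∀ S ≥ 0,
      orbitCount Γ₀ o (R + S) ≤ orbitCount Γ₀ o (R + κ) * orbitCount Γ₀ o (S + κ) := by
  obtain ⟨_, -, hD⟩ := h.exists_dist_le o' h.mem
  replace hD : 0 ≤ D := dist_nonneg.trans hD
  refine ⟨D + 3 * dist o o', by positivity, fun R hR S hS => ?_⟩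
  rw [orbitCount_eq_ncard Γ₀ o (R + (_ + _)), orbitCount_eq_ncard Γ₀ o (S + (_ + _))]
  refine orbitCount_le_ncard_mul_ncard (hdisc.finite_setOf_dist_le o o _)
    (hdisc.finite_setOf_dist_le o o _) fun γ hγ hγo => ?_
  have hγo' := dist_apply_le_add γ o' o
  rw [dist_comm o' o] at hγo'
  obtain ⟨α, hα, β, hβ, hαβ, hαo, hβo⟩ := h.exists_mul_eq hγ
    (R := R + dist o o') (S := S + dist o o') (by positivity) (by positivity) (by linarith)
  exact ⟨α, ⟨hα, by linarith [dist_apply_le_add α o o']⟩,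
    β, ⟨hβ, by linarith [dist_apply_le_add β o o']⟩, hαβ⟩

end ConvexCocompactOn

end ConvexCocompact

section PoincareSeries

variable {X : Type*} [MetricSpace X] {Γ : Subgroup (X ≃ᵢ X)} {o : X} {s : ℝ}

/-- The term of the Poincaré series `∑ exp (-s d(g o, o))` at `g`. -/
noncomputable def poincareTerm (s : ℝ) (o : X) (g : X ≃ᵢ X) : ℝ :=
  Real.exp (-(s * dist (g o) o))

theorem poincareTerm_pos (s : ℝ) (o : X) (g : X ≃ᵢ X) : 0 < poincareTerm s o g :=
  Real.exp_pos _

theorem poincareTerm_mul_le (hs : 0 ≤ s) (o : X) (g h : X ≃ᵢ X) :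
    poincareTerm s o g * poincareTerm s o h ≤ poincareTerm s o (g * h) := by
  rw [poincareTerm, poincareTerm, ← Real.exp_add, ← neg_add, ← mul_add]
  exact Real.exp_le_exp.2 (neg_le_neg (mul_le_mul_of_nonneg_left (dist_mul_apply_le g h o) hs))

theorem poincareTerm_le_exp {g : X ≃ᵢ X} {R : ℝ} (hs : 0 ≤ s) (hg : R ≤ dist (g o) o) :
    poincareTerm s o g ≤ Real.exp (-(s * R)) :=
  Real.exp_le_exp.2 (neg_le_neg (mul_le_mul_of_nonneg_left hg hs))

theorem exp_le_poincareTerm {g : X ≃ᵢ X} {R : ℝ} (hs : 0 ≤ s) (hg : dist (g o) o ≤ R) :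
    Real.exp (-(s * R)) ≤ poincareTerm s o g :=
  Real.exp_le_exp.2 (neg_le_neg (mul_le_mul_of_nonneg_left hg hs))

theorem sum_poincareTerm_le_tsum (hsum : Summable fun γ : Γ => poincareTerm s o γ)
    {W : Finset (X ≃ᵢ X)} (hW : ∀ w ∈ W, w ∈ Γ) :
    ∑ w ∈ W, poincareTerm s o w ≤ ∑' γ : Γ, poincareTerm s o γ := by
  classical
  rw [← Finset.sum_subtype_of_mem _ hW]
  exact hsum.sum_le_tsum _ fun _ _ => (poincareTerm_pos s o _).le

theorem tendsto_exp_mul_orbitCount (hs : 0 < s)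
    (hsum : Summable fun γ : Γ => poincareTerm s o γ) :
    Tendsto (fun R => Real.exp (-(s * R)) * orbitCount Γ o R) atTop (𝓝 0) := by
  let ball (R : ℝ) : Set Γ := {γ | dist ((γ : X ≃ᵢ X) o) o ≤ R}
  have hexp : Tendsto (fun R => Real.exp (-(s * R))) atTop (𝓝 0) :=
    Real.tendsto_exp_neg_atTop_nhds_zero.comp (tendsto_id.const_mul_atTop hs)
  have hlim : Tendsto (fun R => ∑' γ, (ball R).indicator (fun _ => Real.exp (-(s * R))) γ) atTop
      (𝓝 (∑' _ : Γ, 0)) := by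
    refine tendsto_tsum_of_dominated_convergence hsum
      (fun γ => squeeze_zero (fun R => indicator_nonneg (fun _ _ => (Real.exp_pos _).le) γ)
        (fun R => indicator_le_self' (fun _ _ => (Real.exp_pos _).le) γ) hexp)
      (Eventually.of_forall fun R γ => ?_)
    rw [norm_indicator_eq_indicator_norm]
    refine indicator_apply_le' (fun hγ => ?_) fun _ => (poincareTerm_pos s o γ).le
    rw [Real.norm_of_nonneg (Real.exp_pos _).le]
    exact exp_le_poincareTerm hs.le hγ
  rw [tsum_zero] at hlim
  refine hlim.congr fun R => ?_
  rw [← tsum_subtype, tsum_const, nsmul_eq_mul, mul_comm]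
  rfl

theorem HasFiniteCritExp.not_summable_poincareTerm [Infinite Γ] (hfin : HasFiniteCritExp Γ o)
    {κ : ℝ} (hlow : ∀ n : ℕ, n ≠ 0 → Real.exp (critExp Γ o * n) ≤ orbitCount Γ o (n + 2 * κ)) :
    ¬ Summable fun γ : Γ => poincareTerm (critExp Γ o) o γ := by
  intro hsum
  rcases hfin.critExp_nonneg.eq_or_lt with hzero | hpos
  · simp only [← hzero, poincareTerm, zero_mul, neg_zero, Real.exp_zero] at hsum
    exact one_ne_zero ((summable_const_iff (1 : ℝ)).1 hsum)
  have hlim := (tendsto_exp_mul_orbitCount hpos hsum).comp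
    (tendsto_natCast_atTop_atTop.atTop_add (tendsto_const_nhds (x := 2 * κ)))
  refine (Real.exp_pos (-(critExp Γ o * (2 * κ)))).not_ge (ge_of_tendsto hlim ?_)
  filter_upwards [eventually_ne_atTop 0] with n hn
  calc Real.exp (-(critExp Γ o * (2 * κ)))
      = Real.exp (-(critExp Γ o * (n + 2 * κ))) * Real.exp (critExp Γ o * n) := by
        rw [← Real.exp_add]
        ring_nf
    _ ≤ Real.exp (-(critExp Γ o * (n + 2 * κ))) * orbitCount Γ o (n + 2 * κ) := by
        gcongr
        exact hlow n hn

theorem sum_poincareTerm_annulus_le (h : IsDiscreteSubgroup Γ) (hs : 0 ≤ s) {Q t : ℝ}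
    (hQ : ∀ R ≥ 0, orbitCount Γ o R ≤ Q * Real.exp (t * R)) (W : Finset Γ) (j : ℕ) :
    ∑ γ ∈ W with ⌊dist (γ.1 o) o⌋₊ = j, poincareTerm s o γ ≤
      Q * Real.exp t * Real.exp (j * (t - s)) := by
  have hcard : ({γ ∈ W | ⌊dist (γ.1 o) o⌋₊ = j}.card : ℝ) ≤
      Q * Real.exp (t * (j + 1)) := by
    refine le_trans (Nat.cast_le.2 ?_) (hQ (j + 1) (by positivity))
    rw [← ncard_coe_finset]
    refine ncard_le_ncard (fun γ hγ => ?_) (h o _)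
    obtain ⟨-, rfl⟩ := Finset.mem_filter.1 hγ
    exact (Nat.lt_floor_add_one (dist (γ.1 o) o)).le
  calc ∑ γ ∈ W with ⌊dist (γ.1 o) o⌋₊ = j, poincareTerm s o γ
      ≤ {γ ∈ W | ⌊dist (γ.1 o) o⌋₊ = j}.card • Real.exp (-(s * j)) := by
        refine Finset.sum_le_card_nsmul _ _ _ fun γ hγ => poincareTerm_le_exp hs ?_
        obtain ⟨-, rfl⟩ := Finset.mem_filter.1 hγ
        exact Nat.floor_le dist_nonneg
    _ ≤ Q * Real.exp (t * (j + 1)) * Real.exp (-(s * j)) := by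
        rw [nsmul_eq_mul]
        gcongr
    _ = Q * Real.exp t * Real.exp (j * (t - s)) := by
        rw [mul_assoc, mul_assoc, ← Real.exp_add, ← Real.exp_add]
        ring_nf

theorem IsDiscreteSubgroup.summable_poincareTerm (h : IsDiscreteSubgroup Γ)
    (hfin : HasFiniteCritExp Γ o) (hs : critExp Γ o < s) :
    Summable fun γ : Γ => poincareTerm s o γ := by
  classical
  obtain ⟨t, hδt, hts⟩ := exists_between hs
  have hs0 : 0 ≤ s := hfin.critExp_nonneg.trans hs.le
  obtain ⟨Q, hQ⟩ := h.exists_orbitCount_le_exp hfin hδt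
  have hQ0 : 0 ≤ Q := by simpa using (Nat.cast_nonneg _).trans (hQ 0 le_rfl)
  have hgeom : Summable fun j : ℕ => Q * Real.exp t * Real.exp (j * (t - s)) :=
    (Real.summable_exp_nat_mul_iff.2 (sub_neg.2 hts)).mul_left _
  let annulus (γ : Γ) : ℕ := ⌊dist ((γ : X ≃ᵢ X) o) o⌋₊
  refine summable_of_sum_le (c := ∑' j : ℕ, Q * Real.exp t * Real.exp (j * (t - s)))
    (fun γ => (poincareTerm_pos s o γ).le) fun W => ?_
  rw [← Finset.sum_fiberwise_of_maps_to fun γ hγ => Finset.mem_image_of_mem annulus hγ]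
  exact (Finset.sum_le_sum fun j _ => sum_poincareTerm_annulus_le h hs0 hQ W j).trans
    (hgeom.sum_le_tsum _ fun _ _ => by positivity)

end PoincareSeries

section Separated

theorem exists_isSeparated_isCover {α : Type*} (U : SetRel α α) [U.IsRefl] [U.IsSymm] (S : Set α) :
    ∃ N ⊆ S, U.IsSeparated N ∧ U.IsCover S N := by
  obtain ⟨N, hN⟩ := zorn_subset {N | N ⊆ S ∧ U.IsSeparated N} fun c hc hchain =>
    ⟨⋃₀ c, ⟨sUnion_subset fun N hN => (hc hN).1,
      (pairwise_sUnion hchain.directedOn).2 fun N hN => (hc hN).2⟩, fun _ => subset_sUnion_of_mem⟩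
  exact ⟨N, hN.prop.1, hN.prop.2, .of_maximal_isSeparated hN⟩

variable {X : Type*} [MetricSpace X] {Γ : Subgroup (X ≃ᵢ X)} {o o' : X} {s ρ : ℝ}

/-- The relation on isometries of moving `o'` to points at distance at most `ρ`. -/
def orbitClose (o' : X) (ρ : ℝ) : SetRel (X ≃ᵢ X) (X ≃ᵢ X) :=
  {p | dist (p.1 o') (p.2 o') ≤ ρ}

theorem mem_orbitClose {g h : X ≃ᵢ X} : (g, h) ∈ orbitClose o' ρ ↔ dist (g o') (h o') ≤ ρ :=
  Iff.rfl

theorem summable_poincareTerm_of_isCover (hdisc : IsDiscreteSubgroup Γ) (hs : 0 ≤ s)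
    {S : Set (X ≃ᵢ X)} (hS : S ⊆ Γ) (hcover : (orbitClose o' ρ).IsCover Γ S)
    (hsum : Summable fun σ : S => poincareTerm s o σ) :
    Summable fun γ : Γ => poincareTerm s o γ := by
  let F : Set (X ≃ᵢ X) := {φ | φ ∈ Γ ∧ dist (φ o') o' ≤ ρ}
  have : Finite F := hdisc.finite_setOf_dist_le o' o' ρ
  have hfactor : ∀ γ : Γ, ∃ p : F × S, (p.2 : X ≃ᵢ X) * p.1 = γ := by
    rintro ⟨γ, hγ⟩
    obtain ⟨σ, hσ, hγσ⟩ := hcover hγ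
    refine ⟨(⟨σ⁻¹ * γ, Γ.mul_mem (Γ.inv_mem (hS hσ)) hγ, ?_⟩, ⟨σ, hσ⟩), mul_inv_cancel_left σ γ⟩
    rwa [IsometryEquiv.mul_apply, dist_inv_apply]
  choose p hp using hfactor
  have hprod : Summable fun q : F × S =>
      (poincareTerm s o (q.1 : X ≃ᵢ X)⁻¹)⁻¹ * poincareTerm s o q.2 :=
    (Summable.of_finite (f := fun φ : F => (poincareTerm s o (φ : X ≃ᵢ X)⁻¹)⁻¹)).mul_of_nonneg hsum
      (fun _ => inv_nonneg.2 (poincareTerm_pos _ _ _).le) fun _ => (poincareTerm_pos _ _ _).le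
  have hinj : p.Injective := fun γ γ' heq => Subtype.ext (by rw [← hp γ, ← hp γ', heq])
  refine Summable.of_nonneg_of_le (fun γ => (poincareTerm_pos s o γ).le) (fun γ => ?_)
    (hprod.comp_injective hinj)
  have hmul := poincareTerm_mul_le hs o γ ((p γ).1 : X ≃ᵢ X)⁻¹
  rw [← hp γ, mul_inv_cancel_right, hp γ, ← le_mul_inv_iff₀ (poincareTerm_pos _ _ _)] at hmul
  exact hmul.trans_eq (mul_comm _ _)

/-- A finite subset of `Γ₀` whose orbit points of `o'` are at distance more than `ρ` from each
other and from `o'`: the letters of the ping-pong. -/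
structure IsSeparatedIn (Γ₀ : Subgroup (X ≃ᵢ X)) (o' : X) (ρ : ℝ) (T : Finset (X ≃ᵢ X)) :
    Prop where
  mem : ∀ γ ∈ T, γ ∈ Γ₀
  lt_dist : ∀ γ ∈ T, ρ < dist (γ o') o'
  isSeparated : (orbitClose o' ρ).IsSeparated (T : Set (X ≃ᵢ X))

theorem IsDiscreteSubgroup.exists_isSeparatedIn (hdisc : IsDiscreteSubgroup Γ) (hs : 0 ≤ s)
    (hdiv : ¬ Summable fun γ : Γ => poincareTerm s o γ) (o' : X) (hρ : 0 ≤ ρ) (Q : ℝ) :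
    ∃ T, IsSeparatedIn Γ o' ρ T ∧ Q < ∑ γ ∈ T, poincareTerm s o γ := by
  classical
  have : (orbitClose o' ρ).IsRefl := ⟨fun g => by rwa [mem_orbitClose, dist_self]⟩
  have : (orbitClose o' ρ).IsSymm := ⟨fun g h => by simp only [mem_orbitClose, dist_comm, imp_self]⟩
  obtain ⟨S, hSΓ, hsep, hcover⟩ := exists_isSeparated_isCover (orbitClose o' ρ) (Γ : Set (X ≃ᵢ X))
  let F : Finset (X ≃ᵢ X) := (hdisc.finite_setOf_dist_le o' o' ρ).toFinset
  obtain ⟨T, hT⟩ : ∃ T : Finset S,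
      Q + ∑ φ ∈ F, poincareTerm s o φ < ∑ σ ∈ T, poincareTerm s o σ := by
    by_contra! hbdd
    exact hdiv (summable_poincareTerm_of_isCover hdisc hs hSΓ hcover
      (summable_of_sum_le (fun σ => (poincareTerm_pos s o σ).le) hbdd))
  let T' : Finset (X ≃ᵢ X) := T.map (Function.Embedding.subtype _)
  have hT'S : ∀ γ ∈ T' \ F, γ ∈ S := fun γ hγ => by
    obtain ⟨σ, -, rfl⟩ := Finset.mem_map.1 (Finset.mem_sdiff.1 hγ).1
    exact σ.2
  refine ⟨T' \ F, ⟨fun γ hγ => hSΓ (hT'S γ hγ), fun γ hγ => ?_, hsep.mono_right hT'S⟩, ?_⟩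
  · refine not_le.1 fun hγρ => (Finset.mem_sdiff.1 hγ).2 ?_
    exact (Finite.mem_toFinset _).2 ⟨hSΓ (hT'S γ hγ), hγρ⟩
  · have hsplit : ∑ γ ∈ T', poincareTerm s o γ ≤
        ∑ γ ∈ T' \ F, poincareTerm s o γ + ∑ γ ∈ F, poincareTerm s o γ := by
      rw [← Finset.sum_union Finset.sdiff_disjoint, Finset.sdiff_union_self_eq_union]
      exact Finset.sum_le_sum_of_subset_of_nonneg Finset.subset_union_left
        fun γ _ _ => (poincareTerm_pos s o γ).le
    rw [Finset.sum_map] at hsplit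
    exact lt_of_add_lt_add_right (hT.trans_le hsplit)

end Separated

section Words

open scoped Pointwise

/-- Words of equal length in the letters `A` have distinct products. -/
def HasDistinctWords {G : Type*} [Monoid G] (A : Set G) : Prop :=
  ∀ k : ℕ, (A ×ˢ (A ^ k)).InjOn fun p => p.1 * p.2

theorem HasDistinctWords.pow_sum_le {G : Type*} [Monoid G] [DecidableEq G] {A : Finset G}
    (hA : HasDistinctWords (A : Set G)) {φ : G → ℝ} (hφ : ∀ g, 0 ≤ φ g) (hone : 1 ≤ φ 1)
    (hmul : ∀ g h, φ g * φ h ≤ φ (g * h)) (k : ℕ) :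
    (∑ a ∈ A, φ a) ^ k ≤ ∑ w ∈ A ^ k, φ w := by
  induction k with
  | zero => simpa only [pow_zero, Finset.sum_singleton, ← Finset.singleton_one] using hone
  | succ k ih =>
    have hinj : (↑(A ×ˢ (A ^ k)) : Set (G × G)).InjOn fun p => p.1 * p.2 := by
      simpa using hA k
    calc (∑ a ∈ A, φ a) ^ (k + 1)
        ≤ (∑ a ∈ A, φ a) * ∑ w ∈ A ^ k, φ w := by
          rw [pow_succ']
          exact mul_le_mul_of_nonneg_left ih (Finset.sum_nonneg fun a _ => hφ a)
      _ = ∑ p ∈ A ×ˢ (A ^ k), φ p.1 * φ p.2 := by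
          rw [Finset.sum_mul_sum, ← Finset.sum_product']
      _ ≤ ∑ p ∈ A ×ˢ (A ^ k), φ (p.1 * p.2) := Finset.sum_le_sum fun p _ => hmul _ _
      _ = ∑ w ∈ A ^ (k + 1), φ w := by
          rw [pow_succ', ← Finset.image_mul_product, Finset.sum_image hinj]

variable {X : Type*} [MetricSpace X] {Γ Γ₀ : Subgroup (X ≃ᵢ X)} {C : Set X} {f : X ≃ᵢ X}
  {o o' x₀ : X} {D r s : ℝ} {T : Finset (X ≃ᵢ X)}

/-- The Poincaré series of `Γ` dominates every power of `∑ a ∈ A, poincareTerm t o a`, which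
exceeds `1` for some `t > s`. -/
theorem HasDistinctWords.lt_critExp {A : Finset (X ≃ᵢ X)}
    (hA : HasDistinctWords (A : Set (X ≃ᵢ X))) (hAΓ : (A : Set (X ≃ᵢ X)) ⊆ Γ)
    (hdisc : IsDiscreteSubgroup Γ) (hfin : HasFiniteCritExp Γ o) (hs : 0 ≤ s)
    (hsum : 1 < ∑ a ∈ A, poincareTerm s o a) : s < critExp Γ o := by
  classical
  by_contra! hle
  have hcont : Continuous fun t => ∑ a ∈ A, poincareTerm t o a := by
    unfold poincareTerm
    fun_prop
  obtain ⟨t, hsum, hst⟩ : ∃ t, 1 < ∑ a ∈ A, poincareTerm t o a ∧ s < t :=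
    (((hcont.tendsto s).eventually_const_lt hsum).filter_mono nhdsWithin_le_nhds |>.and
      (eventually_mem_nhdsWithin (s := Ioi s))).exists
  obtain ⟨k, hk⟩ := pow_unbounded_of_one_lt (∑' γ : Γ, poincareTerm t o γ) hsum
  have hword : ∀ w ∈ A ^ k, w ∈ Γ := fun w hw =>
    Subgroup.pow_subset hAΓ (by rwa [← Finset.coe_pow])
  refine hk.not_ge (le_trans ?_ (sum_poincareTerm_le_tsum
    (hdisc.summable_poincareTerm hfin (hle.trans_lt hst)) hword))
  exact hA.pow_sum_le (fun g => (poincareTerm_pos t o g).le) (by simp [poincareTerm])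
    (poincareTerm_mul_le (hs.trans hst.le) o) k

namespace IsPingPong

theorem exists_isNearestPoint_mul [ProperSpace X] (hf : IsPingPong f C o' r)
    (h : ConvexCocompactOn Γ₀ C o' D) (hC : IsClosed C) {γ : X ≃ᵢ X} (hγ : γ ∈ Γ₀) {x c : X}
    (hc : IsNearestPoint C x c) (hcr : r < dist c o') :
    ∃ c', IsNearestPoint C ((γ * f) x) c' ∧ dist c' (γ o') ≤ r := by
  obtain ⟨c', hc'⟩ := IsNearestPoint.exists_of_isClosed hC ⟨o', h.mem⟩ (f x)
  refine ⟨γ c', ?_, (γ.dist_eq c' o').trans_le (hf x c c' hc hcr hc')⟩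
  simpa [h.image_eq γ hγ] using hc'.map γ

theorem exists_isNearestPoint_of_mem_pow [ProperSpace X] (hf : IsPingPong f C o' r)
    (h : ConvexCocompactOn Γ₀ C o' D) (hC : IsClosed C) (hT : IsSeparatedIn Γ₀ o' (2 * r) T)
    (hx₀ : x₀ ∈ C) (hx₀r : r < dist x₀ o') (k : ℕ) :
    ∀ w ∈ ((T : Set (X ≃ᵢ X)) * {f}) ^ k, ∃ c, IsNearestPoint C (w x₀) c ∧ r < dist c o' := by
  induction k with
  | zero =>
    rintro _ rfl
    exact ⟨x₀, .of_forall_dist_le hx₀ (by simp), hx₀r⟩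
  | succ k ih =>
    rw [pow_succ']
    rintro _ ⟨_, ⟨γ, hγ, _, rfl, rfl⟩, w, hw, rfl⟩
    obtain ⟨c, hc, hcr⟩ := ih w hw
    obtain ⟨c', hc', hc'r⟩ := hf.exists_isNearestPoint_mul h hC (hT.mem γ hγ) hc hcr
    refine ⟨c', hc', ?_⟩
    linarith [hT.lt_dist γ hγ, dist_triangle_left (γ o') o' c']

/-- The nearest point of `C` to `γ f w x₀` is `r`-close to `γ o'`, hence determines `γ`. -/
theorem hasDistinctWords [CAT0 X] [ProperSpace X] (hf : IsPingPong f C o' r)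
    (h : ConvexCocompactOn Γ₀ C o' D) (hC : IsClosed C) (hT : IsSeparatedIn Γ₀ o' (2 * r) T)
    (hx₀ : x₀ ∈ C) (hx₀r : r < dist x₀ o') :
    HasDistinctWords ((T : Set (X ≃ᵢ X)) * {f}) := by
  rintro k ⟨_, w₁⟩ ⟨⟨γ₁, hγ₁, _, rfl, rfl⟩, hw₁⟩ ⟨_, w₂⟩ ⟨⟨γ₂, hγ₂, f, rfl, rfl⟩, hw₂⟩ heq
  obtain ⟨c₁, hc₁, hc₁r⟩ := hf.exists_isNearestPoint_of_mem_pow h hC hT hx₀ hx₀r k w₁ hw₁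
  obtain ⟨c₂, hc₂, hc₂r⟩ := hf.exists_isNearestPoint_of_mem_pow h hC hT hx₀ hx₀r k w₂ hw₂
  obtain ⟨d₁, hd₁, hd₁r⟩ := hf.exists_isNearestPoint_mul h hC (hT.mem γ₁ hγ₁) hc₁ hc₁r
  obtain ⟨d₂, hd₂, hd₂r⟩ := hf.exists_isNearestPoint_mul h hC (hT.mem γ₂ hγ₂) hc₂ hc₂r
  rw [← IsometryEquiv.mul_apply] at hd₁ hd₂
  change γ₁ * f * w₁ = γ₂ * f * w₂ at heq
  rw [heq] at hd₁
  obtain rfl := hd₁.unique h.convex hd₂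
  have hγ : γ₁ = γ₂ := by
    refine hT.isSeparated.eq hγ₁ hγ₂ (not_not.2 (mem_orbitClose.2 ?_))
    linarith [dist_triangle_left (γ₁ o') (γ₂ o') d₁]
  subst hγ
  rw [mul_left_cancel heq]

end IsPingPong

theorem lt_sum_poincareTerm_mul_singleton [DecidableEq (X ≃ᵢ X)] (hs : 0 ≤ s)
    (hT : (poincareTerm s o f)⁻¹ < ∑ γ ∈ T, poincareTerm s o γ) :
    1 < ∑ a ∈ T * {f}, poincareTerm s o a := by
  rw [inv_lt_iff_one_lt_mul₀ (poincareTerm_pos s o f), Finset.sum_mul] at hT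
  rw [Finset.mul_singleton, Finset.smul_finset_def,
    Finset.sum_image (MulAction.injective (MulOpposite.op f)).injOn]
  exact hT.trans_le (Finset.sum_le_sum fun γ _ => poincareTerm_mul_le hs o γ f)

theorem ConvexCocompactOn.critExp_lt [CAT0 X] [ProperSpace X] [Infinite Γ₀]
    (h₀ : ConvexCocompactOn Γ₀ C o' D) (hC : IsClosed C) (hle : Γ₀ ≤ Γ)
    (hdisc : IsDiscreteSubgroup Γ) (hrk : RankOne Γ) (hfin : HasFiniteCritExp Γ o)
    (hindex : (Γ₀.subgroupOf Γ).index = 0) : critExp Γ₀ o < critExp Γ o := by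
  classical
  have hdisc₀ := hdisc.mono hle
  have hfin₀ := hdisc.hasFiniteCritExp_of_le hfin hle
  have hδ := hfin₀.critExp_nonneg
  obtain ⟨f, hf, r, hr, hpp⟩ := h₀.exists_isPingPong hle hdisc hrk hindex
  obtain ⟨κ, hκ, hmul⟩ := h₀.exists_orbitCount_add_le hdisc₀ o
  have hdiv := hfin₀.not_summable_poincareTerm fun n hn => hdisc₀.exp_le_orbitCount hκ hmul hn
  obtain ⟨T, hT, hsum⟩ := hdisc₀.exists_isSeparatedIn hδ hdiv o' (mul_nonneg zero_le_two hr)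
    (poincareTerm (critExp Γ₀ o) o f)⁻¹
  obtain ⟨γ₀, hγ₀⟩ : T.Nonempty :=
    Finset.nonempty_of_sum_ne_zero ((inv_pos.2 (poincareTerm_pos _ _ _)).trans hsum).ne'
  have hwords := hpp.hasDistinctWords h₀ hC hT (h₀.apply_mem (hT.mem γ₀ hγ₀))
    (by linarith [hT.lt_dist γ₀ hγ₀])
  rw [← Finset.coe_singleton, ← Finset.coe_mul] at hwords
  refine hwords.lt_critExp ?_ hdisc hfin hδ (lt_sum_poincareTerm_mul_singleton hδ hsum)
  rw [Finset.coe_mul, Finset.coe_singleton]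
  rintro _ ⟨γ, hγ, _, rfl, rfl⟩
  exact Γ.mul_mem (hle (hT.mem γ hγ)) hf

end Words

section NonElementary

variable {X : Type*} [MetricSpace X] {Γ : Subgroup (X ≃ᵢ X)} {o x : X} {ℓ : ℝ → X} {D τ : ℝ}
  {h : X ≃ᵢ X}

theorem AsympRay.of_asympRay_right {r₁ r₂ r : ℝ → X} (h₁ : AsympRay r₁ r) (h₂ : AsympRay r₂ r) :
    AsympRay r₁ r₂ := by
  obtain ⟨M₁, h₁⟩ := h₁
  obtain ⟨M₂, h₂⟩ := h₂
  exact ⟨M₁ + M₂, fun t ht =>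
    (dist_triangle_right _ _ (r t)).trans (add_le_add (h₁ t ht) (h₂ t ht))⟩

theorem IsGeodLine.comp_neg (hℓ : IsGeodLine ℓ) : IsGeodLine fun t => ℓ (-t) := fun s t => by
  rw [hℓ, neg_sub_neg, abs_sub_comm]

theorem GeodFromTo.apply_eq_lineMap [CAT0 X] {γ : ℝ → X} {x y : X} (hγ : GeodFromTo γ x y) {l : ℝ}
    (hl : l ∈ Icc (0 : ℝ) 1) : γ (l * dist x y) = CAT0.lineMap x y l := by
  obtain ⟨hgeod, hzero, hone⟩ := hγ
  have hmem : l * dist x y ∈ Icc 0 (dist x y) :=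
    ⟨mul_nonneg hl.1 dist_nonneg, mul_le_of_le_one_left dist_nonneg hl.2⟩
  refine CAT0.eq_lineMap hl ?_ ?_
  · nth_rw 1 [← hzero]
    rw [hgeod 0 ⟨le_rfl, dist_nonneg⟩ _ hmem, zero_sub, abs_neg, abs_of_nonneg hmem.1]
  · nth_rw 2 [← hone]
    rw [hgeod _ hmem _ ⟨dist_nonneg, le_rfl⟩, abs_of_nonpos (sub_nonpos.2 hmem.2)]
    ring

namespace IsGeodLine

theorem dist_apply_le_of_geodFromTo [CAT0 X] (hℓ : IsGeodLine ℓ) {γ : ℝ → X}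
    (hγ : GeodFromTo γ o x) {u : ℝ} (hu : 0 ≤ u) (hxu : dist x (ℓ u) ≤ D) {t : ℝ}
    (ht : t ∈ Icc 0 (dist o x)) : dist (γ t) (ℓ t) ≤ 2 * D + dist o (ℓ 0) := by
  have hl : t / dist o x ∈ Icc (0 : ℝ) 1 :=
    ⟨div_nonneg ht.1 dist_nonneg, div_le_one_of_le₀ ht.2 dist_nonneg⟩
  have htl : t / dist o x * dist o x = t :=
    div_mul_cancel_of_imp fun hzero => (ht.2.trans_eq hzero).antisymm ht.1
  generalize t / dist o x = l at hl htl
  have hparam : |u - dist o x| ≤ D + dist o (ℓ 0) := by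
    have hu' : dist (ℓ 0) (ℓ u) = u := by rw [hℓ, zero_sub, abs_neg, abs_of_nonneg hu]
    rw [abs_le]
    constructor <;> linarith [dist_triangle4 (ℓ 0) o x (ℓ u), dist_triangle4 o (ℓ 0) (ℓ u) x,
      dist_comm o (ℓ 0), dist_comm x (ℓ u)]
  have hγℓ : dist (γ t) (ℓ (l * u)) ≤ (1 - l) * dist o (ℓ 0) + l * D := by
    have hlu := hℓ.apply_eq_lineMap 0 u hl
    rw [zero_add, sub_zero] at hlu
    rw [← htl, hγ.apply_eq_lineMap hl, hlu]
    exact (CAT0.dist_lineMap_lineMap_le o x _ _ hl).trans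
      (add_le_add_right (mul_le_mul_of_nonneg_left hxu hl.1) _)
  have hℓℓ : dist (ℓ (l * u)) (ℓ t) ≤ l * (D + dist o (ℓ 0)) := by
    rw [hℓ, ← htl, ← mul_sub, abs_mul, abs_of_nonneg hl.1]
    exact mul_le_mul_of_nonneg_left hparam hl.1
  have hlD : l * D ≤ D := mul_le_of_le_one_left (dist_nonneg.trans hxu) hl.2
  linarith [dist_triangle (γ t) (ℓ (l * u)) (ℓ t)]

theorem asympRay_of_frequently [CAT0 X] (hℓ : IsGeodLine ℓ) {r : ℝ → X} {x : ℕ → X}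
    (hx : Tendsto (fun n => dist o (x n)) atTop atTop) {γ : ℕ → ℝ → X}
    (hγ : ∀ n, GeodFromTo (γ n) o (x n))
    (hlim : ∀ t, 0 ≤ t → Tendsto (fun n => γ n (min t (dist o (x n)))) atTop (𝓝 (r t)))
    (hfreq : ∃ᶠ n in atTop, ∃ u ≥ 0, dist (x n) (ℓ u) ≤ D) : AsympRay r ℓ := by
  refine ⟨2 * D + dist o (ℓ 0), fun t ht => ?_⟩
  refine (isClosed_closedBall (x := ℓ t)).mem_of_frequently_of_tendsto ?_ (hlim t ht)
  refine (hfreq.and_eventually (hx.eventually_ge_atTop t)).mono ?_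
  rintro n ⟨⟨u, hu, hxu⟩, hn⟩
  rw [min_eq_left hn]
  exact hℓ.dist_apply_le_of_geodFromTo (hγ n) hu hxu ⟨ht, hn⟩

theorem asympRay_or_of_inLimitSet [CAT0 X] (hℓ : IsGeodLine ℓ)
    (hnear : ∀ g ∈ Γ, ∃ u, dist (g o) (ℓ u) ≤ D) {r : ℝ → X} (hr : InLimitSet Γ o r) :
    AsympRay r ℓ ∨ AsympRay r fun t => ℓ (-t) := by
  obtain ⟨-, -, g, hg, hx, γ, hγ, hlim⟩ := hr
  choose u hu using fun n => hnear (g n) (hg n)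
  have hfreq : ∃ᶠ n in (atTop : Filter ℕ), 0 ≤ u n ∨ u n ≤ 0 :=
    .of_forall fun n => le_total _ _
  refine (frequently_or_distrib.1 hfreq).imp (fun hpos => ?_) fun hneg => ?_
  · exact hℓ.asympRay_of_frequently hx hγ hlim (hpos.mono fun n hn => ⟨u n, hn, hu n⟩)
  · exact hℓ.comp_neg.asympRay_of_frequently hx hγ hlim
      (hneg.mono fun n hn => ⟨-u n, neg_nonneg.2 hn, by rw [neg_neg]; exact hu n⟩)

end IsGeodLine

theorem NonElementary.exists_lt_dist [CAT0 X] (hne : NonElementary Γ o) (hℓ : IsGeodLine ℓ)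
    (D : ℝ) : ∃ g ∈ Γ, ∀ u, D < dist (g o) (ℓ u) := by
  by_contra! hnear
  obtain ⟨r₁, r₂, r₃, h₁, h₂, h₃, h₁₂, h₁₃, h₂₃⟩ := hne
  have hend {r : ℝ → X} (hr : InLimitSet Γ o r) := hℓ.asympRay_or_of_inLimitSet hnear hr
  rcases hend h₁ with h₁ | h₁ <;> rcases hend h₂ with h₂ | h₂ <;> rcases hend h₃ with h₃ | h₃
  all_goals first
    | exact h₁₂ (h₁.of_asympRay_right h₂)
    | exact h₁₃ (h₁.of_asympRay_right h₃)
    | exact h₂₃ (h₂.of_asympRay_right h₃)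

namespace TranslatesLine

theorem index_zpowers_eq_zero [CAT0 X] (hℓ : IsGeodLine ℓ) (hh : TranslatesLine h ℓ τ)
    (hne : NonElementary Γ o) : ((Subgroup.zpowers h).subgroupOf Γ).index = 0 := by
  by_contra hindex
  obtain ⟨F, hF, hcover⟩ := exists_finite_mul_inv_mem_of_index_ne_zero hindex
  obtain ⟨D, hD⟩ := (hF.image fun φ : X ≃ᵢ X => dist (φ o) (ℓ 0)).bddAbove
  obtain ⟨g, hg, hfar⟩ := hne.exists_lt_dist hℓ D
  obtain ⟨φ, hφ, n, hn⟩ := hcover g hg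
  refine (hfar (n * τ)).not_ge ?_
  have hgφ : g = h ^ n * φ := eq_mul_of_mul_inv_eq hn.symm
  have hn0 := hh.zpow n 0
  rw [zero_add] at hn0
  rw [hgφ, IsometryEquiv.mul_apply, ← hn0, IsometryEquiv.dist_eq]
  exact hD (mem_image_of_mem _ hφ)

theorem infinite_zpowers (hℓ : IsGeodLine ℓ) (hh : TranslatesLine h ℓ τ) (hτ : τ ≠ 0) :
    Infinite (Subgroup.zpowers h) := by
  refine Infinite.of_injective (fun n : ℤ => (⟨h ^ n, n, rfl⟩ : Subgroup.zpowers h))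
    fun m n hmn => ?_
  have hmn' : (h ^ m) (ℓ 0) = (h ^ n) (ℓ 0) := by rw [Subtype.mk.inj hmn]
  rw [hh.zpow, hh.zpow] at hmn'
  exact_mod_cast mul_right_cancel₀ hτ (add_left_cancel (hℓ.isometry.injective hmn'))

theorem convexCocompactOn_zpowers [CAT0 X] (hℓ : IsGeodLine ℓ) (hh : TranslatesLine h ℓ τ)
    (hτ : 0 < τ) : ConvexCocompactOn (Subgroup.zpowers h) (range ℓ) (ℓ 0) τ where
  convex := hℓ.geodConvex_range
  image_eq := by
    rintro _ ⟨n, rfl⟩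
    exact (hh.zpow n).image_range
  mem := mem_range_self 0
  exists_dist_le := by
    rintro _ ⟨t, rfl⟩
    refine ⟨h ^ ⌊t / τ⌋, ⟨_, rfl⟩, ?_⟩
    have hle : ⌊t / τ⌋ * τ ≤ t := (le_div_iff₀ hτ).1 (Int.floor_le _)
    have hlt : t < (⌊t / τ⌋ + 1) * τ := (div_lt_iff₀ hτ).1 (Int.lt_floor_add_one _)
    rw [hh.zpow, hℓ, zero_add, abs_of_nonneg (sub_nonneg.2 hle)]
    linarith

end TranslatesLine

theorem RankOne.critExp_pos [CAT0 X] [ProperSpace X] (hrk : RankOne Γ)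
    (hdisc : IsDiscreteSubgroup Γ) (hne : NonElementary Γ o) (hfin : HasFiniteCritExp Γ o) :
    0 < critExp Γ o := by
  obtain ⟨h, hh, ℓ, hℓ, -, τ, hτ, htrans⟩ := id hrk
  have hle : Subgroup.zpowers h ≤ Γ := Subgroup.zpowers_le.2 hh
  have : Infinite (Subgroup.zpowers h) := TranslatesLine.infinite_zpowers hℓ htrans hτ.ne'
  exact (hdisc.hasFiniteCritExp_of_le hfin hle).critExp_nonneg.trans_lt
    ((TranslatesLine.convexCocompactOn_zpowers hℓ htrans hτ).critExp_lt hℓ.isClosed_range hle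
      hdisc hrk hfin (TranslatesLine.index_zpowers_eq_zero hℓ htrans hne))

end NonElementary

/-- Proposition 4.2: let `X` be a proper CAT(0) space, `Γ` a non-elementary rank one
discrete subgroup of isometries with finite critical exponent, and `Γ₀ ≤ Γ` a subgroup
acting cocompactly on a closed convex subset `C ⊆ X`.  Then `Γ₀` has infinite index in
`Γ` if and only if `δ(Γ₀) < δ(Γ)`. -/
theorem infinite_index_iff_critExp_lt
    {X : Type*} [MetricSpace X] [ProperSpace X] [CAT0 X]
    (Γ Γ₀ : Subgroup (X ≃ᵢ X)) (hle : Γ₀ ≤ Γ)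
    (hdisc : IsDiscreteSubgroup Γ)
    (o : X) (hne : NonElementary Γ o) (hrk : RankOne Γ) (hfin : HasFiniteCritExp Γ o)
    (C : Set X) (hCne : C.Nonempty) (hclosed : IsClosed C) (hconv : GeodConvex C)
    (hinv : ∀ g ∈ Γ₀, (g : X ≃ᵢ X) '' C = C)
    (o' : X) (ho' : o' ∈ C) (R : ℝ)
    (hcocpt : ∀ x ∈ C, ∃ g ∈ Γ₀, dist x ((g : X ≃ᵢ X) o') ≤ R) :
    (Γ₀.subgroupOf Γ).index = 0 ↔ critExp Γ₀ o < critExp Γ o := by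
  have h₀ : ConvexCocompactOn Γ₀ C o' R := ⟨hconv, hinv, ho', hcocpt⟩
  constructor
  · intro hindex
    rcases finite_or_infinite Γ₀ with hfinite | hinfinite
    · exact (hdisc.mono hle).critExp_nonpos.trans_lt (hrk.critExp_pos hdisc hne hfin)
    · exact h₀.critExp_lt hclosed hle hdisc hrk hfin hindex
  · intro hlt
    by_contra hindex
    exact (hdisc.critExp_le_of_index_ne_zero hfin hle hindex).not_gt hlt
end
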